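/- Let Γ be a non-elementary hyperbolic group with a fixed finite generating set S and associated word metric d_w, and let μ be a symmetric probability measure whose support generates Γ, with Green function G. Then the Green metric d_G is quasi-isometric to d_w and hyperbolic if and only if the following two conditions hold: (ED) there are positive constants C₁, c₁ such that G(e,γ) ≤ C₁ e^{−c₁ d_w(e,γ)} for all γ ∈ Γ; and (QR) for every r ≥ 0 there is a constant C(r) such that G(e,γ) ≤ C(r) G(e,γ') G(γ',γ) whenever γ,γ' ∈ Γ and γ' is at d_w-distance at most r from a d_w-geodesic segment between e and γ. -/

import Mathlib

open Filter MeasureTheory Topology Metric Set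
open scoped ENNReal

noncomputable section

namespace GHM

/-! ### Coarse geometry of distance functions -/

/-- The Gromov product `(x|y)_w` of `x` and `y` seen from `w`, for a distance function `d`. -/
def gromov {X : Type*} (d : X → X → ℝ) (w x y : X) : ℝ :=
  (d x w + d y w - d x y) / 2

/-- `d` is `δ`-hyperbolic (four point condition on Gromov products). -/
def IsHyperbolicWith {X : Type*} (d : X → X → ℝ) (δ : ℝ) : Prop :=
  ∀ w x y z : X, min (gromov d w x y) (gromov d w x z) - δ ≤ gromov d w y z

/-- `d` is Gromov hyperbolic. -/
def IsHyperbolic {X : Type*} (d : X → X → ℝ) : Prop :=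
  ∃ δ : ℝ, 0 ≤ δ ∧ IsHyperbolicWith d δ

/-- `d` is a genuine metric. -/
structure IsMetricFun {X : Type*} (d : X → X → ℝ) : Prop where
  refl : ∀ x, d x x = 0
  pos : ∀ x y, x ≠ y → 0 < d x y
  symm : ∀ x y, d x y = d y x
  triangle : ∀ x y z, d x z ≤ d x y + d y z

/-- `f` is a `(Λ,c)`-quasi-isometric embedding from `(X,dX)` to `(Y,dY)`. -/
def QIEmbed {X Y : Type*} (dX : X → X → ℝ) (dY : Y → Y → ℝ)
    (f : X → Y) (Λ c : ℝ) : Prop :=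
  ∀ x x' : X, dX x x' / Λ - c ≤ dY (f x) (f x') ∧ dY (f x) (f x') ≤ Λ * dX x x' + c

/-- `(X,dX)` and `(Y,dY)` are quasi-isometric. -/
def QuasiIsometric {X Y : Type*} (dX : X → X → ℝ) (dY : Y → Y → ℝ) : Prop :=
  ∃ (f : X → Y) (Λ c C : ℝ), 1 ≤ Λ ∧ 0 ≤ c ∧ 0 ≤ C ∧
    QIEmbed dX dY f Λ c ∧ ∀ y : Y, ∃ x : X, dY (f x) y ≤ C

variable {G : Type*} [Group G]

/-- Word length of `g` with respect to the (symmetrized) finite set `S`. -/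
def wordLength (S : Finset G) (g : G) : ℕ :=
  sInf {n : ℕ | ∃ l : List G, l.length = n ∧ (∀ a ∈ l, a ∈ S ∨ a⁻¹ ∈ S) ∧ l.prod = g}

/-- The word metric associated with a finite generating set `S`. -/
def wordDist (S : Finset G) (x y : G) : ℝ := wordLength S (x⁻¹ * y)

/-- `S` generates the group. -/
def Generates (S : Finset G) : Prop := Subgroup.closure (S : Set G) = ⊤

/-- The standard metric on `ℤ`. -/
def intDist (m n : ℤ) : ℝ := |(m : ℝ) - (n : ℝ)|

/-- `G` is a non-elementary hyperbolic group: finitely generated, its word metrics are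
Gromov hyperbolic, it is infinite, and it is not quasi-isometric to `ℤ`. -/
def NonElemHyperbolic (G : Type*) [Group G] : Prop :=
  Infinite G ∧ (∃ S : Finset G, Generates S) ∧
    ∀ S : Finset G, Generates S →
      IsHyperbolic (wordDist S) ∧ ¬ QuasiIsometric (wordDist S) intDist

/-- `d` is invariant under left translations. -/
def LeftInvariant (d : G → G → ℝ) : Prop := ∀ g x y : G, d (g * x) (g * y) = d x y

/-- `d` belongs to the class `𝒟(Γ)`: it is a left-invariant Gromov hyperbolic metric on the
group, quasi-isometric to a word metric of a finite generating set. -/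
def MemD (d : G → G → ℝ) : Prop :=
  IsMetricFun d ∧ LeftInvariant d ∧ IsHyperbolic d ∧
    ∃ S : Finset G, Generates S ∧ QuasiIsometric d (wordDist S)

/-! ### Random walks -/

/-- `μ` is (the density of) a probability measure on the (countable) group. -/
def IsProbDensity (μ : G → ℝ) : Prop := (∀ g, 0 ≤ μ g) ∧ HasSum μ 1

/-- `μ` is symmetric. -/
def IsSymmetric (μ : G → ℝ) : Prop := ∀ g : G, μ g⁻¹ = μ g

/-- The support of `μ` generates `G`. -/
def GeneratesSupp (μ : G → ℝ) : Prop := Subgroup.closure {g : G | μ g ≠ 0} = ⊤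

open scoped Classical in
/-- Convolution powers `μ^n` of `μ`. -/
def convPow (μ : G → ℝ) : ℕ → G → ℝ
  | 0 => fun g => if g = 1 then 1 else 0
  | n + 1 => fun g => ∑' y : G, convPow μ n y * μ (y⁻¹ * g)

/-- The Green function `G(x,y) = ∑_n μ^n(x⁻¹y)`. -/
def greenFn (μ : G → ℝ) (x y : G) : ℝ := ∑' n : ℕ, convPow μ n (x⁻¹ * y)

/-- The random walk is transient, i.e. `G(e,e) = ∑_n μ^n(e) < ∞`. -/
def Transient (μ : G → ℝ) : Prop := Summable fun n : ℕ => convPow μ n (1 : G)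

/-- Successive positions of a walk started at `x` with increments `l`. -/
def walkPositions (x : G) (l : List G) : List G := l.scanl (fun p a => p * a) x

/-- The increments `l` describe a trajectory from `x` which hits `y` for the first time at
its final position. -/
def IsFirstHitPath (x y : G) (l : List G) : Prop :=
  (walkPositions x l).getLast? = some y ∧ y ∉ (walkPositions x l).dropLast

/-- `F(x,y)`: the probability that the `μ`-random walk started at `x` ever hits `y`. -/
def hitProb (μ : G → ℝ) (x y : G) : ℝ :=
  ∑' l : {l : List G // IsFirstHitPath x y l}, ((l : List G).map μ).prod

/-- The Green metric `d_G(x,y) = - log F(x,y)`. -/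
def greenDist (μ : G → ℝ) (x y : G) : ℝ := - Real.log (hitProb μ x y)

/-- `μ` has a finite first moment with respect to `d`. -/
def FiniteFirstMoment (d : G → G → ℝ) (μ : G → ℝ) : Prop :=
  Summable fun g : G => d 1 g * μ g

/-- `μ` has an exponential moment with respect to `d`. -/
def HasExpMoment (d : G → G → ℝ) (μ : G → ℝ) : Prop :=
  ∃ lam : ℝ, 0 < lam ∧ Summable fun g : G => Real.exp (lam * d 1 g) * μ g

/-- The entropy `H(μ^n) = -∑_γ μ^n(γ) log μ^n(γ)` of the `n`-th convolution power. -/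
def entropyAt (μ : G → ℝ) (n : ℕ) : ℝ :=
  - ∑' g : G, convPow μ n g * Real.log (convPow μ n g)

/-- `h` is the asymptotic entropy of the walk. -/
def HasEntropy (μ : G → ℝ) (h : ℝ) : Prop :=
  Tendsto (fun n : ℕ => entropyAt μ n / n) atTop (𝓝 h)

/-- `v` is the logarithmic volume growth of `(G,d)` (seen from the identity). -/
def HasGrowth (d : G → G → ℝ) (v : ℝ) : Prop :=
  Filter.limsup (fun R : ℝ => Real.log (Nat.card {g : G // d 1 g ≤ R}) / R) atTop = v

/-- The position `Z_n = ω_0 ω_1 ⋯ ω_{n-1}` of the random walk at time `n`, given the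
sequence of increments `ω`. -/
def walkPos (n : ℕ) (ω : ℕ → G) : G := ((List.range n).map ω).prod

/-- `P` is the law on the space of increment sequences of an i.i.d. sequence of law `μ`:
cylinders have product measure.  (This characterizes the path measure of the random walk.) -/
def IsWalkMeasure [MeasurableSpace G] (μ : G → ℝ) (P : Measure (ℕ → G)) : Prop :=
  IsProbabilityMeasure P ∧
    ∀ (n : ℕ) (g : Fin n → G),
      P {ω : ℕ → G | ∀ i : Fin n, ω (i : ℕ) = g i} = ∏ i : Fin n, ENNReal.ofReal (μ (g i))

/-! ### The Gromov boundary, visual metrics, harmonic and quasiconformal measures -/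

/-- A sequence tends to infinity if Gromov products (at the base point `1`) go to `∞`. -/
def TendstoInfinity (d : G → G → ℝ) (u : ℕ → G) : Prop :=
  Tendsto (fun p : ℕ × ℕ => gromov d 1 (u p.1) (u p.2)) atTop atTop

/-- A realization of the Gromov boundary of `(G,d)` as an abstract type `B`:
`conv u b` means that the sequence `u` converges at infinity to the boundary point `b`.
The group acts on its boundary by `smul`. -/
structure BoundaryData (G : Type*) [Group G] (d : G → G → ℝ) (B : Type*) where
  conv : (ℕ → G) → B → Prop
  smul : G → B → B
  conv_unique : ∀ u b b', conv u b → conv u b' → b = b'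
  exists_conv : ∀ u, TendstoInfinity d u → ∃ b, conv u b
  conv_tendstoInfinity : ∀ u b, conv u b → TendstoInfinity d u
  conv_iff : ∀ u v b, conv u b →
    (conv v b ↔ Tendsto (fun n => gromov d 1 (u n) (v n)) atTop atTop)
  conv_surj : ∀ b, ∃ u, conv u b
  smul_conv : ∀ (γ : G) (u) (b), conv u b → conv (fun n => γ * u n) (smul γ b)

/-- Asymptotic Gromov product of two sequences. -/
def seqGromov (d : G → G → ℝ) (u v : ℕ → G) : ℝ :=
  Filter.liminf (fun n => gromov d 1 (u n) (v n)) atTop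

/-- The metric of `B` is a visual metric of parameter `ε` (with comparison constant `C`)
for the hyperbolic distance `d` on the group:  `dist(a,b) ≍ exp(-ε (a|b))`. -/
def IsVisualMetric {B : Type*} [MetricSpace B] (d : G → G → ℝ)
    (bd : BoundaryData G d B) (ε C : ℝ) : Prop :=
  0 < ε ∧ 0 < C ∧
    ∀ u v b b', bd.conv u b → bd.conv v b' → b ≠ b' →
      dist b b' ≤ C * Real.exp (-ε * seqGromov d u v) ∧
      Real.exp (-ε * seqGromov d u v) ≤ C * dist b b'

/-- `ν` is the harmonic measure of the random walk of law `μ` on the boundary `B`: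
it is the law of the almost sure limit `Z_∞` of the walk on the boundary. -/
def IsHarmonicMeasure {B : Type*} [MeasurableSpace G] [MeasurableSpace B]
    (d : G → G → ℝ) (bd : BoundaryData G d B) (μ : G → ℝ)
    (P : Measure (ℕ → G)) (ν : Measure B) : Prop :=
  IsWalkMeasure μ P ∧
    ∃ Zinf : (ℕ → G) → B, Measurable Zinf ∧
      (∀ᵐ ω ∂P, bd.conv (fun n => walkPos n ω) (Zinf ω)) ∧ ν = P.map Zinf

/-- Busemann function `β_b(x,y)` of the boundary point `b`. -/
def busemann {B : Type*} (d : G → G → ℝ) (bd : BoundaryData G d B)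
    (x y : G) (b : B) : ℝ :=
  sSup {t : ℝ | ∃ u, bd.conv u b ∧
    t = Filter.limsup (fun n => d x (u n) - d y (u n)) atTop}

/-- The image measure `γ^*ρ`, `γ^*ρ(A) = ρ(γA)`. -/
def actPush {B : Type*} [MeasurableSpace B] {d : G → G → ℝ}
    (bd : BoundaryData G d B) (γ : G) (ρ : Measure B) : Measure B :=
  ρ.map (bd.smul γ⁻¹)

/-- `ρ` is a quasiconformal measure on the boundary for `(G,d)` of logarithmic growth
parameter `v`: `γ^*ρ` and `ρ` are mutually absolutely continuous, with density
`dγ^*ρ/dρ ≍ exp (v β_b(1,γ⁻¹))` (uniformly in `γ`). -/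
def IsQuasiconformalMeasure {B : Type*} [MeasurableSpace B] {d : G → G → ℝ}
    (bd : BoundaryData G d B) (ρ : Measure B) (v : ℝ) : Prop :=
  ∃ C : ℝ, 0 < C ∧ ∀ γ : G,
    actPush bd γ ρ ≪ ρ ∧ ρ ≪ actPush bd γ ρ ∧
      ∀ᵐ b ∂ρ,
        (actPush bd γ ρ).rnDeriv ρ b
            ≤ ENNReal.ofReal (C * Real.exp (v * busemann d bd 1 γ⁻¹ b)) ∧
        ENNReal.ofReal (C⁻¹ * Real.exp (v * busemann d bd 1 γ⁻¹ b))
            ≤ (actPush bd γ ρ).rnDeriv ρ b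

/-- `ν` is Ahlfors regular of dimension `α`: `ν(B(b,r)) ≍ r^α`. -/
def AhlforsRegularOfDim {B : Type*} [MetricSpace B] [MeasurableSpace B]
    (ν : Measure B) (α : ℝ) : Prop :=
  ∃ C : ℝ, 0 < C ∧ ∀ (b : B) (r : ℝ), 0 < r → r ≤ Metric.diam (Set.univ : Set B) →
    ENNReal.ofReal (C⁻¹ * r ^ α) ≤ ν (Metric.ball b r) ∧
      ν (Metric.ball b r) ≤ ENNReal.ofReal (C * r ^ α)

/-- The Hausdorff dimension of a measure: the infimum of the Hausdorff dimensions of sets of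
full measure. -/
def measureDim {B : Type*} [EMetricSpace B] [MeasurableSpace B] (ν : Measure B) : ℝ≥0∞ :=
  ⨅ (A : Set B) (_ : ν Aᶜ = 0), dimH A

/-! ### Word geodesics -/

/-- `p 0, …, p n` is a geodesic segment for the word metric of `S`. -/
def IsWordGeodesic (S : Finset G) (n : ℕ) (p : ℕ → G) : Prop :=
  ∀ i j : ℕ, i ≤ n → j ≤ n → wordDist S (p i) (p j) = |(i : ℝ) - (j : ℝ)|

/-- `v` lies within distance `r` of some word geodesic segment from `x` to `y`. -/
def NearWordGeodesic (S : Finset G) (x y v : G) (r : ℝ) : Prop :=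
  ∃ (n : ℕ) (p : ℕ → G), IsWordGeodesic S n p ∧ p 0 = x ∧ p n = y ∧
    ∃ i ≤ n, wordDist S v (p i) ≤ r

/-! ### Martin boundary -/

/-- The Martin kernel `K(x,y) = G(x,y)/G(e,y)`. -/
def martinKernel (μ : G → ℝ) (x y : G) : ℝ := greenFn μ x y / greenFn μ 1 y

/-- The embedding `y ↦ K(·,y)` of the group in `C(G)` (pointwise topology). -/
def martinMap (μ : G → ℝ) (y : G) : G → ℝ := fun x => martinKernel μ x y

/-- The Martin boundary: the boundary of the image of the group under the Martin embedding
in the space of functions with the topology of pointwise convergence. -/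
def martinBoundary (μ : G → ℝ) : Set (G → ℝ) :=
  closure (Set.range (martinMap μ)) \ Set.range (martinMap μ)

/-- `h` is a `μ`-harmonic function. -/
def IsHarmonicFn (μ : G → ℝ) (h : G → ℝ) : Prop :=
  ∀ x : G, h x = ∑' y : G, h y * μ (x⁻¹ * y)

/-- `h` is a minimal positive harmonic function. -/
def IsMinimalHarmonic (μ : G → ℝ) (h : G → ℝ) : Prop :=
  IsHarmonicFn μ h ∧ (∀ x, 0 < h x) ∧
    ∀ u : G → ℝ, IsHarmonicFn μ u → (∀ x, 0 ≤ u x) → (∀ x, u x ≤ h x) →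
      ∃ c : ℝ, u = fun x => c * h x

/-! ### Metric space versions (geodesic and quasiruled spaces) -/

/-- A geodesic metric space. -/
def IsGeodesicSpace (X : Type*) [MetricSpace X] : Prop :=
  ∀ x y : X, ∃ f : ℝ → X, f 0 = x ∧ f (dist x y) = y ∧
    ∀ s ∈ Set.Icc (0:ℝ) (dist x y), ∀ t ∈ Set.Icc (0:ℝ) (dist x y),
      dist (f s) (f t) = |s - t|

/-- `f : [a,b] → Y` is a `(Λ,c)`-quasigeodesic segment. -/
def IsQuasigeodesicOn {Y : Type*} [MetricSpace Y] (f : ℝ → Y) (a b Λ c : ℝ) : Prop :=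
  ∀ s ∈ Set.Icc a b, ∀ t ∈ Set.Icc a b,
    |s - t| / Λ - c ≤ dist (f s) (f t) ∧ dist (f s) (f t) ≤ Λ * |s - t| + c

/-- `f : [a,b] → Y` is a `τ`-quasiruler: Gromov products of triples along it are `≤ τ`. -/
def IsQuasirulerOn {Y : Type*} [MetricSpace Y] (f : ℝ → Y) (a b τ : ℝ) : Prop :=
  ∀ s t u : ℝ, s ∈ Set.Icc a b → t ∈ Set.Icc a b → u ∈ Set.Icc a b → s ≤ t → t ≤ u →
    dist (f s) (f t) + dist (f t) (f u) ≤ dist (f s) (f u) + 2 * τ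

/-- A quasiruled metric space: for some constants `(Λ,c,τ)` every pair of points is joined
by a `(Λ,c)`-quasigeodesic, and every `(Λ,c)`-quasigeodesic is a `τ`-quasiruler. -/
def Quasiruled (Y : Type*) [MetricSpace Y] : Prop :=
  ∃ Λ c τ : ℝ, 1 ≤ Λ ∧ 0 ≤ c ∧ 0 ≤ τ ∧
    (∀ x y : Y, ∃ (a b : ℝ) (f : ℝ → Y), a ≤ b ∧ f a = x ∧ f b = y ∧
      IsQuasigeodesicOn f a b Λ c) ∧
    ∀ (f : ℝ → Y) (a b : ℝ), IsQuasigeodesicOn f a b Λ c → IsQuasirulerOn f a b τ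

/-- A metric space is hyperbolic. -/
def HypSpace (Y : Type*) [MetricSpace Y] : Prop :=
  IsHyperbolic (fun x y : Y => dist x y)

/-- `f` is a quasi-isometry between metric spaces. -/
def MetricQI {X Y : Type*} [MetricSpace X] [MetricSpace Y] (f : X → Y) : Prop :=
  ∃ Λ c C : ℝ, 1 ≤ Λ ∧ 0 ≤ c ∧ 0 ≤ C ∧
    QIEmbed (fun a b : X => dist a b) (fun a b : Y => dist a b) f Λ c ∧
    ∀ y : Y, ∃ x : X, dist (f x) y ≤ C



/-! ### word metric -/

lemma exists_list_closure (A : Set G) (hA : Subgroup.closure A = ⊤) (g : G) :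
    ∃ l : List G, (∀ a ∈ l, a ∈ A ∨ a⁻¹ ∈ A) ∧ l.prod = g := by
  have hg : g ∈ (Subgroup.closure A).toSubmonoid := by rw [hA]; trivial
  rw [Subgroup.closure_toSubmonoid] at hg
  obtain ⟨l, hl, h⟩ := Submonoid.exists_list_of_mem_closure hg
  exact ⟨l, fun a ha => by simpa using hl a ha, h⟩

lemma exists_word (S : Finset G) (hS : Generates S) (g : G) :
    ∃ l : List G, (∀ a ∈ l, a ∈ S ∨ a⁻¹ ∈ S) ∧ l.prod = g := by
  simpa using exists_list_closure (S : Set G) hS g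

lemma exists_min_word (S : Finset G) (hS : Generates S) (g : G) :
    ∃ l : List G, l.length = wordLength S g ∧ (∀ a ∈ l, a ∈ S ∨ a⁻¹ ∈ S) ∧ l.prod = g := by
  have : wordLength S g ∈
      {n : ℕ | ∃ l : List G, l.length = n ∧ (∀ a ∈ l, a ∈ S ∨ a⁻¹ ∈ S) ∧ l.prod = g} := by
    apply Nat.sInf_mem
    obtain ⟨l, h1, h2⟩ := exists_word S hS g
    exact ⟨l.length, l, rfl, h1, h2⟩
  exact this

lemma wordLength_le (S : Finset G) (l : List G) (h : ∀ a ∈ l, a ∈ S ∨ a⁻¹ ∈ S) :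
    wordLength S l.prod ≤ l.length := Nat.sInf_le ⟨l, rfl, h, rfl⟩

lemma wordLength_one (S : Finset G) : wordLength S (1 : G) = 0 :=
  Nat.le_zero.1 (by simpa using wordLength_le S [] (by simp))

lemma wordLength_mul (S : Finset G) (hS : Generates S) (g h : G) :
    wordLength S (g * h) ≤ wordLength S g + wordLength S h := by
  obtain ⟨l, l1, l2, l3⟩ := exists_min_word S hS g
  obtain ⟨k, k1, k2, k3⟩ := exists_min_word S hS h
  have := wordLength_le S (l ++ k) (by
    intro a ha; rcases List.mem_append.1 ha with ha | ha
    · exact l2 a ha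
    · exact k2 a ha)
  simpa [l1, k1, l3, k3] using this

lemma wordLength_inv_le (S : Finset G) (hS : Generates S) (g : G) :
    wordLength S g⁻¹ ≤ wordLength S g := by
  obtain ⟨l, l1, l2, l3⟩ := exists_min_word S hS g
  have := wordLength_le S (l.map (·⁻¹)).reverse (by
    intro a ha
    simp only [List.mem_reverse, List.mem_map] at ha
    obtain ⟨b, hb, rfl⟩ := ha
    rw [inv_inv]; exact (l2 b hb).symm)
  rw [← l1, ← l3, List.prod_inv_reverse]
  simpa using this

lemma wordLength_inv (S : Finset G) (hS : Generates S) (g : G) :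
    wordLength S g⁻¹ = wordLength S g :=
  le_antisymm (wordLength_inv_le S hS g) (by simpa using wordLength_inv_le S hS g⁻¹)

/-- pseudo-metric facts -/
structure IsPM {X : Type*} (d : X → X → ℝ) : Prop where
  refl : ∀ x, d x x = 0
  symm : ∀ x y, d x y = d y x
  tri : ∀ x y z, d x z ≤ d x y + d y z

lemma IsPM.nonneg {X : Type*} {d : X → X → ℝ} (h : IsPM d) (x y : X) : 0 ≤ d x y := by
  have := h.tri x y x
  rw [h.refl, h.symm y x] at this
  linarith

lemma wordDist_pm (S : Finset G) (hS : Generates S) : IsPM (wordDist S) where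
  refl x := by simp [wordDist, wordLength_one]
  symm x y := by
    unfold wordDist
    rw [← wordLength_inv S hS]; simp
  tri x y z := by
    unfold wordDist
    have := wordLength_mul S hS (x⁻¹ * y) (y⁻¹ * z)
    rw [show x⁻¹ * y * (y⁻¹ * z) = x⁻¹ * z by group] at this
    exact_mod_cast this

lemma wordDist_li (S : Finset G) : LeftInvariant (wordDist S) := by
  intro g x y; unfold wordDist; congr 2; group

lemma exists_geod (S : Finset G) (hS : Generates S) (x y : G) :
    ∃ p : ℕ → G, IsWordGeodesic S (wordLength S (x⁻¹ * y)) p ∧ p 0 = x ∧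
      p (wordLength S (x⁻¹ * y)) = y := by
  obtain ⟨l, l1, l2, l3⟩ := exists_min_word S hS (x⁻¹ * y)
  have pm := wordDist_pm S hS
  set n := wordLength S (x⁻¹ * y) with hn
  let p : ℕ → G := fun i => x * (l.take i).prod
  have p0 : p 0 = x := by simp [p]
  have pn : p n = y := by simp [p, ← l1, l3]
  have hup : ∀ i k : ℕ, wordDist S (p i) (p (i + k)) ≤ k := by
    intro i k
    have : (p i)⁻¹ * p (i + k) = ((l.drop i).take k).prod := by
      simp only [p, List.take_add, List.prod_append]; group
    unfold wordDist; rw [this]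
    have h := wordLength_le S ((l.drop i).take k) (fun a ha =>
      l2 a (List.mem_of_mem_drop (List.mem_of_mem_take ha)))
    have h2 : ((l.drop i).take k).length ≤ k := by simp
    exact_mod_cast h.trans h2
  have hdn : wordDist S (p 0) (p n) = n := by rw [p0, pn]; rfl
  have key : ∀ i k : ℕ, i + k ≤ n → wordDist S (p i) (p (i + k)) = k := by
    intro i k hik
    have h1 := hup 0 i
    have h2 := hup (i + k) (n - (i + k))
    rw [show i + k + (n - (i + k)) = n by omega] at h2
    have t1 := pm.tri (p 0) (p i) (p n)
    have t2 := pm.tri (p i) (p (i + k)) (p n)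
    have h3 := hup i k
    rw [zero_add] at h1
    have : ((n - (i + k) : ℕ) : ℝ) = n - (i + k) := by
      rw [Nat.cast_sub hik]; push_cast; ring
    linarith
  refine ⟨p, ?_, p0, pn⟩
  intro i j hi hj
  rcases le_total i j with h | h
  · obtain ⟨k, rfl⟩ := Nat.exists_eq_add_of_le h
    rw [key i k hj]; push_cast; rw [abs_sub_comm, abs_of_nonneg] <;> simp
  · obtain ⟨k, rfl⟩ := Nat.exists_eq_add_of_le h
    rw [pm.symm, key j k hi]; push_cast; rw [abs_of_nonneg] <;> simp

lemma ball_finite (S : Finset G) (hS : Generates S) (n : ℕ) :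
    {g : G | wordLength S g ≤ n}.Finite := by
  classical
  let T : Finset G := S ∪ S.image (·⁻¹)
  have : ∀ n : ℕ, {l : List G | l.length = n ∧ ∀ a ∈ l, a ∈ T}.Finite := by
    intro n
    induction n with
    | zero =>
      refine (Set.finite_singleton ([] : List G)).subset ?_
      rintro l ⟨h, -⟩; simpa using h
    | succ n ih =>
      refine ((T.finite_toSet.prod ih).image (fun q => q.1 :: q.2)).subset ?_
      rintro l ⟨h, h2⟩
      cases l with
      | nil => simp at h
      | cons a l =>
        refine ⟨(a, l), ⟨h2 a (by simp), by simpa using h, fun b hb => h2 b (by simp [hb])⟩, rfl⟩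
  have h2 : (⋃ k ∈ Finset.range (n+1), {l : List G | l.length = k ∧ ∀ a ∈ l, a ∈ T}).Finite :=
    Set.Finite.biUnion (Finset.finite_toSet _) (fun k _ => this k)
  refine (h2.image List.prod).subset ?_
  intro g hg
  obtain ⟨l, l1, l2, l3⟩ := exists_min_word S hS g
  refine ⟨l, ?_, l3⟩
  simp only [Set.mem_iUnion, Finset.mem_range]
  refine ⟨wordLength S g, Nat.lt_succ_of_le hg, l1, fun a ha => ?_⟩
  simp only [T, Finset.mem_union, Finset.mem_image]
  rcases l2 a ha with h | h
  · exact Or.inl h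
  · exact Or.inr ⟨a⁻¹, h, by simp⟩

lemma exists_long [Infinite G] (S : Finset G) (hS : Generates S) (n : ℕ) :
    ∃ g : G, n ≤ wordLength S g := by
  by_contra! h
  exact Set.infinite_univ ((ball_finite S hS n).subset (fun g _ => (h g).le))

/-! ### abstract hyperbolic geometry -/

lemma hyp4 {X : Type*} {d : X → X → ℝ} {δ : ℝ} (h : IsHyperbolicWith d δ) (pm : IsPM d)
    (x y z w : X) : d x z + d y w ≤ max (d x y + d z w) (d x w + d y z) + 2 * δ := by
  have := h w y x z
  unfold gromov at this
  rw [pm.symm y x] at this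
  rcases min_cases ((d y w + d x w - d x y) / 2) ((d y w + d z w - d y z) / 2) with ⟨h1, _⟩ | ⟨h1, _⟩
  · rw [h1] at this
    have := le_max_left (d x y + d z w) (d x w + d y z)
    linarith
  · rw [h1] at this
    have := le_max_right (d x y + d z w) (d x w + d y z)
    linarith

/-- The point `q` on `[w,x]` at distance `t ≤ (x|y)_w`. -/
lemma proj_pt {X : Type*} {d : X → X → ℝ} {δ : ℝ} (h : IsHyperbolicWith d δ) (pm : IsPM d)
    (w x y q : X) (t : ℝ) (hq : d w q = t) (hq2 : d q x = d w x - t)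
    (ht : t ≤ gromov d w x y) : d q y ≤ d w y - t + 2 * δ := by
  have h1 := hyp4 h pm q w y x
  unfold gromov at ht
  rw [pm.symm q w, pm.symm x w, pm.symm y w, pm.symm y x] at *
  rcases max_cases (d w q + d x y) (d q x + d w y) with ⟨h2, _⟩ | ⟨h2, _⟩ <;> rw [h2] at h1 <;> linarith

/-- Existence of a bounded product along quasi-geodesics: `q` near any geodesic. -/
lemma near_of_gromov {X : Type*} {d : X → X → ℝ} {δ : ℝ} (h : IsHyperbolicWith d δ) (pm : IsPM d)
    (x y q p : X) (hp : d x p + d p y = d x y) (hp2 : |d x p - gromov d x q y| ≤ 1) :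
    d q p ≤ gromov d q x y + 2 * δ + 1 := by
  have h1 := hyp4 h pm q x p y
  unfold gromov at *
  rw [abs_le] at hp2
  have e1 := pm.symm q x
  have e2 := pm.symm q y
  have e3 := pm.symm x y
  rcases max_cases (d q x + d p y) (d q y + d x p) with ⟨h2, _⟩ | ⟨h2, _⟩ <;> rw [h2] at h1 <;> linarith

lemma gromov_nonneg {X : Type*} {d : X → X → ℝ} (pm : IsPM d) (w x y : X) : 0 ≤ gromov d w x y := by
  unfold gromov
  have := pm.tri x w y
  rw [pm.symm w y] at this
  linarith

lemma gromov_le {X : Type*} {d : X → X → ℝ} (pm : IsPM d) (w x y : X) : gromov d w x y ≤ d w x := by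
  unfold gromov
  have := pm.tri y x w
  rw [pm.symm y x, pm.symm x w] at *
  linarith

lemma gromov_symm {X : Type*} {d : X → X → ℝ} (pm : IsPM d) (w x y : X) :
    gromov d w x y = gromov d w y x := by
  unfold gromov; rw [pm.symm x y]; ring

/-- any pair of points with a point along a word geodesic at given position -/
lemma exists_on_geod (S : Finset G) (hS : Generates S) (x y : G) (t : ℝ) (h0 : 0 ≤ t)
    (h1 : t ≤ wordDist S x y) :
    ∃ (n i : ℕ) (p : ℕ → G), IsWordGeodesic S n p ∧ p 0 = x ∧ p n = y ∧ i ≤ n ∧ 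
      wordDist S x (p i) = ⌊t⌋₊ ∧ wordDist S (p i) y = wordDist S x y - ⌊t⌋₊ := by
  obtain ⟨p, hp, p0, pn⟩ := exists_geod S hS x y
  have hi : ⌊t⌋₊ ≤ wordLength S (x⁻¹ * y) := by
    have : ((⌊t⌋₊ : ℕ) : ℝ) ≤ (wordLength S (x⁻¹ * y) : ℝ) := (Nat.floor_le h0).trans h1
    exact_mod_cast this
  refine ⟨_, ⌊t⌋₊, p, hp, p0, pn, hi, ?_, ?_⟩
  · have := hp 0 ⌊t⌋₊ (Nat.zero_le _) hi
    rw [p0] at this; rw [this]; simp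
  · have := hp ⌊t⌋₊ _ hi le_rfl
    rw [pn] at this; rw [this, abs_sub_comm, abs_of_nonneg]
    · rfl
    · rw [sub_nonneg]; exact_mod_cast hi


/-! ### branching in non-elementary hyperbolic groups -/

lemma exists_line [Infinite G] (S : Finset G) (hS : Generates S) :
    ∃ p : ℤ → G, ∀ i j : ℤ, wordDist S (p i) (p j) = |(i : ℝ) - j| := by
  have li := wordDist_li S
  have step : ∀ n : ℕ, ∃ P : ℤ → G, P 0 = 1 ∧ ∀ i j : ℤ, |i| ≤ n → |j| ≤ n →
      wordDist S (P i) (P j) = |(i : ℝ) - j| := by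
    intro n
    obtain ⟨g, hg⟩ := exists_long S hS (2 * n)
    obtain ⟨q, hq, -, -⟩ := exists_geod S hS 1 g
    simp only [inv_one, one_mul] at hq
    refine ⟨fun i => (q n)⁻¹ * q ((n : ℤ) + i).toNat, by simp, ?_⟩
    intro i j hi hj
    rw [li, hq _ _ (by rw [abs_le] at hi; omega) (by rw [abs_le] at hj; omega)]
    rw [abs_le] at hi hj
    have e1 : (((((n : ℤ) + i).toNat : ℕ) : ℤ) : ℝ) = n + i := by
      rw [Int.toNat_of_nonneg (by omega)]; push_cast; rfl
    have e2 : (((((n : ℤ) + j).toNat : ℕ) : ℤ) : ℝ) = n + j := by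
      rw [Int.toNat_of_nonneg (by omega)]; push_cast; rfl
    rw [Int.cast_natCast] at e1 e2
    rw [e1, e2]; congr 1; ring
  choose P P0 hP using step
  let U : Ultrafilter ℕ := hyperfilter ℕ
  have hU : (U : Filter ℕ) ≤ atTop := by
    rw [← Nat.cofinite_eq_atTop]; exact hyperfilter_le_cofinite
  have lim : ∀ i : ℤ, ∃ g : G, ∀ᶠ n in (U : Filter ℕ), P n i = g := by
    intro i
    have hfin := ball_finite S hS i.natAbs
    have h1 : ∀ᶠ n in (U : Filter ℕ), P n i ∈ {g : G | wordLength S g ≤ i.natAbs} := by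
      refine hU ?_
      filter_upwards [eventually_ge_atTop i.natAbs] with n hn
      have := hP n 0 i (by simp) (by rw [Int.abs_eq_natAbs]; exact_mod_cast hn)
      rw [P0] at this
      simp only [wordDist, inv_one, one_mul, Int.cast_zero, zero_sub, abs_neg] at this
      rw [← Int.cast_abs, Int.abs_eq_natAbs] at this
      have h3 : wordLength S (P n i) = i.natAbs := by exact_mod_cast this
      exact h3.le
    have h2 : ∃ g ∈ {g : G | wordLength S g ≤ i.natAbs}, ∀ᶠ n in (U : Filter ℕ), P n i = g := by
      rw [← Ultrafilter.eventually_exists_mem_iff hfin]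
      filter_upwards [h1] with n hn
      exact ⟨_, hn, rfl⟩
    obtain ⟨g, -, hg⟩ := h2
    exact ⟨g, hg⟩
  choose p hp using lim
  refine ⟨p, fun i j => ?_⟩
  have h1 : ∀ᶠ n in (U : Filter ℕ), max i.natAbs j.natAbs ≤ n := hU (eventually_ge_atTop _)
  obtain ⟨n, hi, hj, hn⟩ := ((hp i).and ((hp j).and h1)).exists
  rw [← hi, ← hj]
  apply hP
  · rw [Int.abs_eq_natAbs]; exact_mod_cast (le_max_left _ _).trans hn
  · rw [Int.abs_eq_natAbs]; exact_mod_cast (le_max_right _ _).trans hn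

lemma exists_far (hG : NonElemHyperbolic G) (S : Finset G) (hS : Generates S) 
    (p : ℤ → G) (hp : ∀ i j : ℤ, wordDist S (p i) (p j) = |(i : ℝ) - j|) (D : ℕ) :
    ∃ x : G, ∀ i, (D : ℝ) ≤ wordDist S x (p i) := by
  by_contra! hcon
  choose f hf using hcon
  have pm := wordDist_pm S hS
  refine (hG.2.2 S hS).2 ⟨f, 1, 2 * D, D, le_rfl, by positivity, by positivity, ?_, ?_⟩
  · intro x x'
    have := hp (f x) (f x')
    unfold intDist
    rw [← this]
    have t1 := pm.tri x (p (f x)) x'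
    have t2 := pm.tri (p (f x)) (p (f x')) x'
    have t3 := pm.tri (p (f x)) x (p (f x'))
    have t4 := pm.tri x x' (p (f x'))
    have h1 := hf x
    have h2 := hf x'
    have e1 := pm.symm x (p (f x))
    have e2 := pm.symm x' (p (f x'))
    constructor <;> simp only [div_one, one_mul] <;> linarith
  · intro n
    refine ⟨p n, ?_⟩
    unfold intDist
    rw [← hp, pm.symm]
    exact (hf _).le

lemma gromov_li {d : G → G → ℝ} (li : LeftInvariant d) (g w x y : G) :
    gromov d (g * w) (g * x) (g * y) = gromov d w x y := by
  unfold gromov; rw [li, li, li]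

lemma tripod_side (S : Finset G) (hS : Generates S) {δ : ℝ}
    (hyp : IsHyperbolicWith (wordDist S) δ) (D : ℕ) (q y : G) (r : ℕ → G)
    (hr : ∀ s ≤ D, wordDist S q (r s) = s ∧ wordDist S (r s) (r D) = D - s)
    (hy : ∀ s ≤ D, wordDist S y q ≤ wordDist S y (r s)) :
    gromov (wordDist S) q (r D) y ≤ 2 * δ + 1 := by
  have pm := wordDist_pm S hS
  set t := gromov (wordDist S) q (r D) y with ht
  have ht0 : 0 ≤ t := gromov_nonneg pm _ _ _
  have ht1 : t ≤ D := by
    have := gromov_le pm q (r D) y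
    rwa [(hr D le_rfl).1] at this
  have hs : ⌊t⌋₊ ≤ D := Nat.floor_le_of_le ht1
  have := proj_pt hyp pm q (r D) y (r ⌊t⌋₊) ⌊t⌋₊ (hr _ hs).1
    (by rw [(hr _ hs).2, (hr D le_rfl).1]) (Nat.floor_le ht0)
  have h2 := hy _ hs
  rw [pm.symm y q, pm.symm y (r _)] at h2
  have := Nat.lt_floor_add_one t
  linarith

lemma tripod (hG : NonElemHyperbolic G) (S : Finset G) (hS : Generates S) {δ : ℝ} (hδ : 0 ≤ δ)
    (hyp : IsHyperbolicWith (wordDist S) δ) (D : ℕ) :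
    ∃ t : Fin 3 → G, (∀ i, wordDist S 1 (t i) = D) ∧
      ∀ i j, i ≠ j → gromov (wordDist S) 1 (t i) (t j) ≤ 2 * δ + 1 := by
  have := hG.1
  have pm := wordDist_pm S hS
  have li := wordDist_li S
  obtain ⟨p, hp⟩ := exists_line S hS
  obtain ⟨x, hx⟩ := exists_far hG S hS p hp D
  -- nearest point
  obtain ⟨i, hi⟩ : ∃ i : ℤ, ∀ j, wordDist S x (p i) ≤ wordDist S x (p j) := by
    obtain ⟨i, hi⟩ : ∃ i : ℤ, ∀ j, wordLength S (x⁻¹ * p i) ≤ wordLength S (x⁻¹ * p j) :=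
      ⟨Function.argmin (fun j : ℤ => wordLength S (x⁻¹ * p j)),
        fun j => Function.argmin_le (fun j : ℤ => wordLength S (x⁻¹ * p j)) j⟩
    exact ⟨i, fun j => by unfold wordDist; exact_mod_cast hi j⟩
  set q := p i with hq
  obtain ⟨n, k, g, -, -, -, -, hy1, hy2⟩ := exists_on_geod S hS q x D (by positivity)
    (by rw [pm.symm]; exact hx i)
  rw [Nat.floor_natCast] at hy1 hy2
  set y := g k with hy
  have hnear : ∀ j, wordDist S y q ≤ wordDist S y (p j) := by
    intro j
    have := hi j
    have := pm.tri x y (p j)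
    have e1 := pm.symm x y
    have e2 := pm.symm x q
    have e3 := pm.symm y q
    linarith
  have ab : ∀ s : ℕ, s ≤ D → |(s : ℝ) - D| = D - s := by
    intro s hs
    rw [abs_sub_comm, abs_of_nonneg]; rw [sub_nonneg]; exact_mod_cast hs
  have hR := tripod_side S hS hyp D q y (fun s : ℕ => p (i + s))
    (by
      intro s hs
      refine ⟨by rw [hq, hp]; push_cast; rw [show (i : ℝ) - (i + s) = -s by ring]; simp, ?_⟩
      rw [hp, ← ab s hs]; push_cast; congr 1; ring)
    (fun s _ => hnear _)
  have hL := tripod_side S hS hyp D q y (fun s : ℕ => p (i - s))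
    (by
      intro s hs
      refine ⟨by rw [hq, hp]; push_cast; rw [show (i : ℝ) - (i - s) = s by ring]; simp, ?_⟩
      rw [hp, ← ab s hs, abs_sub_comm]; push_cast; congr 1; ring)
    (fun s _ => hnear _)
  have dR : wordDist S q (p (i + D)) = D := by
    rw [hq, hp]; push_cast; rw [show (i : ℝ) - (i + D) = -D by ring]; simp
  have dL : wordDist S q (p (i - D)) = D := by
    rw [hq, hp]; push_cast; rw [show (i : ℝ) - (i - D) = D by ring]; simp
  have hLR : gromov (wordDist S) q (p (i + D)) (p (i - D)) ≤ 2 * δ + 1 := by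
    have : gromov (wordDist S) q (p (i + D)) (p (i - D)) = 0 := by
      unfold gromov
      rw [pm.symm _ q, pm.symm _ q, dR, dL, hp]; push_cast
      rw [show (i : ℝ) + D - (i - D) = D + D by ring, abs_of_nonneg (by positivity)]; ring
    rw [this]; positivity
  let v : Fin 3 → G := ![y, p (i + D), p (i - D)]
  have hv : ∀ a b, a ≠ b → gromov (wordDist S) q (v a) (v b) ≤ 2 * δ + 1 := by
    intro a b hab
    fin_cases a <;> fin_cases b <;> simp [v] at hab ⊢
    · rw [gromov_symm pm]; exact hR
    · rw [gromov_symm pm]; exact hL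
    · exact hR
    · exact hLR
    · exact hL
    · rw [gromov_symm pm]; exact hLR
  refine ⟨fun a => q⁻¹ * v a, ?_, ?_⟩
  · intro a
    have := li q⁻¹ q (v a)
    rw [inv_mul_cancel] at this
    rw [this]
    fin_cases a
    · exact hy1
    · exact dR
    · exact dL
  · intro a b hab
    have := gromov_li li q⁻¹ q (v a) (v b)
    rw [inv_mul_cancel] at this
    rw [this]; exact hv a b hab

/-- endpoints of the tree paths -/
def treeEnd (t : Fin 3 → G) (next : Fin 3 → Bool → Fin 3) : Fin 3 → List Bool → G
  | _, [] => 1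
  | i, b :: ω => t (next i b) * treeEnd t next (next i b) ω

lemma treeEnd_snoc (t : Fin 3 → G) (next : Fin 3 → Bool → Fin 3) (ω : List Bool) (b : Bool) :
    ∀ i, ∃ j, treeEnd t next i (ω ++ [b]) = treeEnd t next i ω * t j := by
  induction ω with
  | nil => intro i; exact ⟨next i b, by simp [treeEnd]⟩
  | cons c ω ih =>
    intro i
    obtain ⟨j, hj⟩ := ih (next i c)
    exact ⟨j, by simp [treeEnd, hj, mul_assoc]⟩

lemma exists_tree (hG : NonElemHyperbolic G) :
    ∃ (t : Fin 3 → G) (X : ∀ n : ℕ, (Fin n → Bool) → G), (∀ n, Function.Injective (X n)) ∧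
      (∀ ω, X 0 ω = 1) ∧
      ∀ n (ω : Fin (n+1) → Bool), ∃ j, X (n+1) ω = X n (Fin.init ω) * t j := by
  obtain ⟨S, hS⟩ := hG.2.1
  obtain ⟨δ, hδ, hyp⟩ := (hG.2.2 S hS).1
  have pm := wordDist_pm S hS
  have li := wordDist_li S
  set d := wordDist S with hd
  set C1 : ℝ := 3 * δ + 1 with hC1
  obtain ⟨D, hD⟩ := exists_nat_gt (2 * C1 + 2 * δ + (C1 + δ))
  obtain ⟨t, ht, htt⟩ := tripod hG S hS hδ hyp D
  have choice : ∀ i : Fin 3, ∃ c : Bool → Fin 3, Function.Injective c ∧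
      ∀ b, gromov d 1 (t i)⁻¹ (t (c b)) ≤ C1 := by
    intro i
    have hone : ∀ j k, j ≠ k → gromov d 1 (t i)⁻¹ (t j) ≤ C1 ∨ gromov d 1 (t i)⁻¹ (t k) ≤ C1 := by
      intro j k hjk
      by_contra! hc
      have h1 := hyp 1 (t i)⁻¹ (t j) (t k)
      have h2 := htt j k hjk
      have := lt_min hc.1 hc.2
      linarith
    have two : ∃ j k, j ≠ k ∧ gromov d 1 (t i)⁻¹ (t j) ≤ C1 ∧ gromov d 1 (t i)⁻¹ (t k) ≤ C1 := by
      have h01 := hone 0 1 (by decide)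
      have h02 := hone 0 2 (by decide)
      have h12 := hone 1 2 (by decide)
      by_cases h0 : gromov d 1 (t i)⁻¹ (t 0) ≤ C1
      · rcases h12 with h | h
        · exact ⟨0, 1, by decide, h0, h⟩
        · exact ⟨0, 2, by decide, h0, h⟩
      · exact ⟨1, 2, by decide, h01.resolve_left h0, h02.resolve_left h0⟩
    obtain ⟨j, k, hjk, hj, hk⟩ := two
    refine ⟨fun b => if b then j else k, ?_, ?_⟩
    · intro a b; cases a <;> cases b <;> simp [hjk, hjk.symm]
    · intro b; cases b <;> simp [hj, hk]
  choose next hinj hnext using choice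
  have push : ∀ i b ω, gromov d 1 (t (next i b))⁻¹ (treeEnd t next (next i b) ω) ≤ C1 + δ →
      (D : ℝ) - C1 - δ ≤ gromov d 1 (t (next i b)) (treeEnd t next i (b :: ω)) := by
    intro i b ω h
    set s := t (next i b) with hs
    have h2 := gromov_li li s 1 s⁻¹ (treeEnd t next (next i b) ω)
    rw [mul_inv_cancel, mul_one] at h2
    have e : treeEnd t next i (b :: ω) = s * treeEnd t next (next i b) ω := rfl
    rw [e]
    rw [← h2] at h
    have h3 := ht (next i b)
    rw [← hs] at h3
    unfold gromov at h ⊢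
    have e1 := pm.symm s 1
    have e2 := pm.symm (s * treeEnd t next (next i b) ω) 1
    have e3 := pm.symm (s * treeEnd t next (next i b) ω) s
    have h3' : d 1 s = D := h3
    linarith
  have small : ∀ ω i, gromov d 1 (t i)⁻¹ (treeEnd t next i ω) ≤ C1 + δ := by
    intro ω
    induction ω with
    | nil =>
      intro i
      simp only [treeEnd, gromov, pm.refl]
      have : 0 ≤ C1 + δ := by positivity
      linarith
    | cons b ω ih =>
      intro i
      have h1 := push i b ω (ih _)
      have h2 := hyp 1 (treeEnd t next i (b :: ω)) (t i)⁻¹ (t (next i b))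
      have h3 := hnext i b
      rw [gromov_symm pm 1 _ (t i)⁻¹, gromov_symm pm 1 _ (t (next i b))] at h2
      rcases min_choice (gromov d 1 (t i)⁻¹ (treeEnd t next i (b :: ω)))
        (gromov d 1 (t (next i b)) (treeEnd t next i (b :: ω))) with h4 | h4 <;> rw [h4] at h2
      · linarith
      · have : 0 ≤ C1 := by positivity
        linarith
  have inj : ∀ ω ω' : List Bool, ω.length = ω'.length → ∀ i,
      treeEnd t next i ω = treeEnd t next i ω' → ω = ω' := by
    intro ω
    induction ω with
    | nil => intro ω' h; intros; exact (List.length_eq_zero_iff.1 h.symm).symm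
    | cons b ω ih =>
      intro ω' hl i he
      cases ω' with
      | nil => simp at hl
      | cons b' ω' =>
        by_cases hb : b = b'
        · subst hb
          simp only [treeEnd, mul_right_inj] at he
          rw [ih ω' (by simpa using hl) _ he]
        · exfalso
          have h1 := push i b ω (small _ _)
          have h2 := push i b' ω' (small _ _)
          rw [← he] at h2
          have h3 := hyp 1 (treeEnd t next i (b :: ω)) (t (next i b)) (t (next i b'))
          rw [gromov_symm pm 1 _ (t (next i b)), gromov_symm pm 1 _ (t (next i b'))] at h3
          have h4 := htt _ _ (fun h => hb (hinj i h))
          have := le_min h1 h2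
          have : 0 ≤ C1 := by positivity
          linarith
  refine ⟨t, fun n ω => treeEnd t next 0 (List.ofFn ω), ?_, ?_, ?_⟩
  · intro n ω ω' h
    exact List.ofFn_injective (inj _ _ (by simp) 0 h)
  · intro ω; simp [treeEnd]
  · intro n ω
    change ∃ j, treeEnd t next 0 (List.ofFn ω) = treeEnd t next 0 (List.ofFn (Fin.init ω)) * t j
    rw [List.ofFn_succ', List.concat_eq_append]
    exact treeEnd_snoc t next _ _ 0


/-! ### convolution powers -/

open scoped Classical in
/-- extended nonnegative convolution powers -/
def cE (m : G → ℝ≥0∞) : ℕ → G → ℝ≥0∞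
  | 0 => fun g => if g = 1 then 1 else 0
  | n + 1 => fun g => ∑' y : G, cE m n y * m (y⁻¹ * g)

lemma cE_zero_add (m : G → ℝ≥0∞) (n : ℕ) (g : G) :
    cE m n g = ∑' y : G, cE m 0 y * cE m n (y⁻¹ * g) := by
  rw [tsum_eq_single 1]
  · simp [cE]
  · intro y hy; simp [cE, hy]

lemma cE_one (m : G → ℝ≥0∞) (g : G) : cE m 1 g = m g := by
  change ∑' y : G, cE m 0 y * m (y⁻¹ * g) = m g
  rw [tsum_eq_single 1]
  · simp [cE]
  · intro y hy; simp [cE, hy]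

lemma cE_add (m : G → ℝ≥0∞) (k n : ℕ) : ∀ g : G,
    cE m (k + n) g = ∑' y : G, cE m k y * cE m n (y⁻¹ * g) := by
  induction n with
  | zero =>
    intro g
    rw [tsum_eq_single g]
    · simp [cE]
    · intro y hy
      have : y⁻¹ * g ≠ 1 := by
        intro h; apply hy; rwa [inv_mul_eq_one] at h
      simp [cE, this]
  | succ n ih =>
    intro g
    change ∑' z : G, cE m (k + n) z * m (z⁻¹ * g) = _
    simp_rw [ih, ← ENNReal.tsum_mul_right]
    rw [ENNReal.tsum_comm]
    refine tsum_congr fun y => ?_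
    change _ = cE m k y * ∑' z : G, cE m n z * m (z⁻¹ * (y⁻¹ * g))
    rw [← ENNReal.tsum_mul_left, ← (Equiv.mulLeft y).tsum_eq]
    refine tsum_congr fun z => ?_
    simp only [Equiv.coe_mulLeft, inv_mul_cancel_left, mul_inv_rev, mul_assoc]

lemma cE_symm (m : G → ℝ≥0∞) (hm : ∀ g, m g⁻¹ = m g) (n : ℕ) : ∀ g : G,
    cE m n g⁻¹ = cE m n g := by
  induction n with
  | zero => intro g; by_cases h : g = 1 <;> simp [cE, h]
  | succ n ih =>
    intro g
    rw [add_comm n 1, cE_add, add_comm 1 n]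
    change _ = ∑' y : G, cE m n y * m (y⁻¹ * g)
    conv_rhs => rw [← (Equiv.mulLeft g).tsum_eq]
    refine tsum_congr fun y => ?_
    rw [cE_one, ← mul_inv_rev, ih, Equiv.coe_mulLeft, mul_comm, ← hm y]
    congr 2; group

lemma cE_sum (m : G → ℝ≥0∞) (hm : ∑' g, m g = 1) (n : ℕ) : ∑' g, cE m n g = 1 := by
  induction n with
  | zero =>
    rw [tsum_eq_single 1]
    · simp [cE]
    · intro y hy; simp [cE, hy]
  | succ n ih =>
    change ∑' g, ∑' y : G, cE m n y * m (y⁻¹ * g) = 1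
    rw [ENNReal.tsum_comm]
    rw [← ih]
    refine tsum_congr fun y => ?_
    rw [ENNReal.tsum_mul_left, ← (Equiv.mulLeft y).tsum_eq]
    simp [hm]

/-- the density with values in `ℝ≥0∞` -/
def mE (μ : G → ℝ) (g : G) : ℝ≥0∞ := ENNReal.ofReal (μ g)

section
variable {μ : G → ℝ} 

lemma mE_sum (hp : IsProbDensity μ) : ∑' g, mE μ g = 1 := by
  unfold mE
  rw [← ENNReal.ofReal_tsum_of_nonneg hp.1 hp.2.summable, hp.2.tsum_eq, ENNReal.ofReal_one]

lemma cE_ne_top (hp : IsProbDensity μ) (n : ℕ) (g : G) : cE (mE μ) n g ≠ ∞ := by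
  have h := ENNReal.le_tsum (f := cE (mE μ) n) g
  rw [cE_sum _ (mE_sum hp)] at h
  exact ne_top_of_le_ne_top ENNReal.one_ne_top h

lemma convPow_eq (hp : IsProbDensity μ) (n : ℕ) : ∀ g, convPow μ n g = (cE (mE μ) n g).toReal := by
  induction n with
  | zero => intro g; simp only [convPow, cE]; split_ifs <;> simp
  | succ n ih =>
    intro g
    simp only [convPow, cE]
    rw [ENNReal.tsum_toReal_eq]
    · refine tsum_congr fun y => ?_
      rw [ih, ENNReal.toReal_mul, mE, ENNReal.toReal_ofReal (hp.1 _)]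
    · intro y; exact ENNReal.mul_ne_top (cE_ne_top hp _ _) ENNReal.ofReal_ne_top

lemma convPow_nonneg (hp : IsProbDensity μ) (n : ℕ) (g : G) : 0 ≤ convPow μ n g := by
  rw [convPow_eq hp]; exact ENNReal.toReal_nonneg

lemma convPow_hasSum (hp : IsProbDensity μ) (n : ℕ) : HasSum (convPow μ n) 1 := by
  have h := cE_sum _ (mE_sum hp) n
  have h2 := ENNReal.hasSum_toReal (f := cE (mE μ) n) (by rw [h]; simp)
  rw [← ENNReal.tsum_toReal_eq (cE_ne_top hp n), h] at h2
  rw [funext (convPow_eq hp n)]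
  simpa using h2

lemma convPow_add (hp : IsProbDensity μ) (k n : ℕ) (g : G) :
    HasSum (fun y => convPow μ k y * convPow μ n (y⁻¹ * g)) (convPow μ (k + n) g) := by
  have h := cE_add (mE μ) k n g
  have h2 := ENNReal.hasSum_toReal (f := fun y => cE (mE μ) k y * cE (mE μ) n (y⁻¹ * g))
    (by rw [← h]; exact cE_ne_top hp _ _)
  rw [← ENNReal.tsum_toReal_eq (fun y => ENNReal.mul_ne_top (cE_ne_top hp _ _) (cE_ne_top hp _ _)),
    ← h, ← convPow_eq hp] at h2
  simpa [ENNReal.toReal_mul, ← convPow_eq hp] using h2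

lemma convPow_symm (hp : IsProbDensity μ) (hs : IsSymmetric μ) (n : ℕ) (g : G) :
    convPow μ n g⁻¹ = convPow μ n g := by
  rw [convPow_eq hp, convPow_eq hp, cE_symm]
  intro g; simp [mE, hs g]

lemma convPow_one (hp : IsProbDensity μ) (g : G) : convPow μ 1 g = μ g := by
  rw [convPow_eq hp, cE_one, mE, ENNReal.toReal_ofReal (hp.1 g)]

/-! ### transience -/

/-- truncated Green function -/
def fN (μ : G → ℝ) (N : ℕ) (x : G) : ℝ := ∑ k ∈ Finset.range N, convPow μ k x

/-- its autocorrelation -/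
def phiN (μ : G → ℝ) (N : ℕ) (g : G) : ℝ :=
  ∑ j ∈ Finset.range N, ∑ k ∈ Finset.range N, convPow μ (j + k) g

lemma corr (hp : IsProbDensity μ) (hs : IsSymmetric μ) (j k : ℕ) (g : G) :
    HasSum (fun x => convPow μ j x * convPow μ k (x * g)) (convPow μ (j + k) g) := by
  have := convPow_add hp j k g
  rw [← (Equiv.inv G).hasSum_iff] at this
  refine this.congr_fun ?_ |> id
  intro x
  simp [convPow_symm hp hs]

lemma fN_nonneg (hp : IsProbDensity μ) (N : ℕ) (x : G) : 0 ≤ fN μ N x :=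
  Finset.sum_nonneg fun k _ => convPow_nonneg hp k x

lemma fN_hasSum (hp : IsProbDensity μ) (N : ℕ) : HasSum (fN μ N) N := by
  have : HasSum (fun x => ∑ k ∈ Finset.range N, convPow μ k x) (∑ k ∈ Finset.range N, (1 : ℝ)) :=
    hasSum_sum fun k _ => convPow_hasSum hp k
  simp only [Finset.sum_const, Finset.card_range, nsmul_eq_mul, mul_one] at this
  exact this

lemma phi_hasSum (hp : IsProbDensity μ) (hs : IsSymmetric μ) (N : ℕ) (g : G) :
    HasSum (fun x => fN μ N x * fN μ N (x * g)) (phiN μ N g) := by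
  have : HasSum (fun x => ∑ j ∈ Finset.range N, ∑ k ∈ Finset.range N,
      convPow μ j x * convPow μ k (x * g)) (phiN μ N g) :=
    hasSum_sum fun j _ => hasSum_sum fun k _ => corr hp hs j k g
  simpa [fN, Finset.sum_mul_sum] using this

/-- energy of the increment -/
def qN (μ : G → ℝ) (N : ℕ) (g : G) : ℝ := 2 * (phiN μ N 1 - phiN μ N g)

lemma q_hasSum (hp : IsProbDensity μ) (hs : IsSymmetric μ) (N : ℕ) (g : G) :
    HasSum (fun x => (fN μ N (x * g) - fN μ N x) ^ 2) (qN μ N g) := by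
  have h1 := phi_hasSum hp hs N 1
  have h2 := phi_hasSum hp hs N g
  have h3 := ((Equiv.mulRight g).hasSum_iff).2 h1
  have := (h3.add h1).sub (h2.mul_left 2)
  have e : qN μ N g = phiN μ N 1 + phiN μ N 1 - 2 * phiN μ N g := by unfold qN; ring
  rw [e]
  refine this.congr_fun ?_
  intro x; simp; ring

lemma q_nonneg (hp : IsProbDensity μ) (hs : IsSymmetric μ) (N : ℕ) (g : G) : 0 ≤ qN μ N g :=
  (q_hasSum hp hs N g).nonneg fun _ => sq_nonneg _

lemma q_mul (hp : IsProbDensity μ) (hs : IsSymmetric μ) (N : ℕ) (g h : G) :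
    qN μ N (g * h) ≤ 2 * qN μ N g + 2 * qN μ N h := by
  have h1 := q_hasSum hp hs N (g * h)
  have h2 := q_hasSum hp hs N g
  have h3 := ((Equiv.mulRight g).hasSum_iff).2 (q_hasSum hp hs N h)
  refine hasSum_le ?_ h1 ((h2.mul_left 2).add (h3.mul_left 2))
  intro x
  simp only [Function.comp, Equiv.coe_mulRight, ← mul_assoc]
  nlinarith [sq_nonneg ((fN μ N (x * g * h) - fN μ N (x * g)) - (fN μ N (x * g) - fN μ N x))]

lemma q_inv (hp : IsProbDensity μ) (hs : IsSymmetric μ) (N : ℕ) (g : G) :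
    qN μ N g⁻¹ = qN μ N g := by
  unfold qN phiN; simp [convPow_symm hp hs]

lemma q_gen (hp : IsProbDensity μ) (hs : IsSymmetric μ) (N : ℕ) (g : G) :
    μ g * qN μ N g ≤ 2 * fN μ N 1 := by
  have h1 : HasSum (fun y => μ y * phiN μ N y)
      (∑ j ∈ Finset.range N, ∑ k ∈ Finset.range N, convPow μ (j + k + 1) 1) := by
    have : HasSum (fun y => ∑ j ∈ Finset.range N, ∑ k ∈ Finset.range N, μ y * convPow μ (j + k) y)
        (∑ j ∈ Finset.range N, ∑ k ∈ Finset.range N, convPow μ (j + k + 1) 1) := by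
      refine hasSum_sum fun j _ => hasSum_sum fun k _ => ?_
      have := convPow_add hp 1 (j + k) (1 : G)
      rw [add_comm 1 (j + k)] at this
      simpa [convPow_one hp, convPow_symm hp hs] using this
    simpa [phiN, Finset.mul_sum] using this
  have h2 : HasSum (fun y => μ y * qN μ N y) (2 * (phiN μ N 1 -
      (∑ j ∈ Finset.range N, ∑ k ∈ Finset.range N, convPow μ (j + k + 1) 1))) := by
    have := ((hp.2.mul_right (phiN μ N 1)).sub h1).mul_left 2
    rw [one_mul] at this
    refine this.congr_fun ?_
    intro y; simp only [qN]; ring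
  have h3 : μ g * qN μ N g ≤ _ := le_hasSum h2 g
    (fun y _ => mul_nonneg (hp.1 y) (q_nonneg hp hs N y))
  refine h3.trans ?_
  have h4 : phiN μ N 1 - (∑ j ∈ Finset.range N, ∑ k ∈ Finset.range N, convPow μ (j + k + 1) (1:G))
      = fN μ N 1 - ∑ j ∈ Finset.range N, convPow μ (j + N) 1 := by
    unfold phiN fN
    rw [← Finset.sum_sub_distrib, ← Finset.sum_sub_distrib]
    refine Finset.sum_congr rfl fun j _ => ?_
    rw [← Finset.sum_sub_distrib]
    have := Finset.sum_range_sub' (fun k => convPow μ (j + k) (1:G)) N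
    simpa [add_assoc] using this
  rw [h4]
  have : 0 ≤ ∑ j ∈ Finset.range N, convPow μ (j + N) (1:G) :=
    Finset.sum_nonneg fun j _ => convPow_nonneg hp _ _
  linarith

lemma q_bound (hp : IsProbDensity μ) (hs : IsSymmetric μ) (hg : GeneratesSupp μ) (g : G) :
    ∃ K : ℝ, 0 ≤ K ∧ ∀ N, qN μ N g ≤ K * fN μ N 1 := by
  have hmem : g ∈ Subgroup.closure {g : G | μ g ≠ 0} := by rw [hg]; trivial
  induction hmem using Subgroup.closure_induction with
  | mem x hx =>
    have hx' : 0 < μ x := lt_of_le_of_ne (hp.1 x) (Ne.symm hx)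
    refine ⟨2 / μ x, by positivity, fun N => ?_⟩
    have := q_gen hp hs N x
    rw [div_mul_eq_mul_div, le_div_iff₀ hx']; linarith
  | one => exact ⟨0, le_rfl, fun N => by simp [qN]⟩
  | mul x y _ _ hx hy =>
    obtain ⟨K, hK0, hK⟩ := hx
    obtain ⟨L, hL0, hL⟩ := hy
    refine ⟨2 * K + 2 * L, by positivity, fun N => ?_⟩
    have := q_mul hp hs N x y
    have := hK N
    have := hL N
    linarith
  | inv x _ hx =>
    obtain ⟨K, hK0, hK⟩ := hx
    exact ⟨K, hK0, fun N => by rw [q_inv hp hs]; exact hK N⟩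

lemma avg_step (hp : IsProbDensity μ) (hs : IsSymmetric μ) (N : ℕ)
    (t : Fin 3 → G) (X : ∀ n : ℕ, (Fin n → Bool) → G) (hX : ∀ n, Function.Injective (X n))
    (hstep : ∀ n (ω : Fin (n+1) → Bool), ∃ j, X (n+1) ω = X n (Fin.init ω) * t j) (n : ℕ) :
    (∑ ω : Fin n → Bool, fN μ N (X n ω)) / 2 ^ n -
      (∑ ω : Fin (n+1) → Bool, fN μ N (X (n+1) ω)) / 2 ^ (n+1)
      ≤ (∑ j, √(qN μ N (t j))) * (√2⁻¹) ^ n := by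
  set f := fN μ N with hf
  have sum_init : ∀ h : (Fin n → Bool) → ℝ,
      ∑ ω : Fin (n+1) → Bool, h (Fin.init ω) = 2 * ∑ ω, h ω := by
    intro h
    rw [← (Fin.snocEquiv (fun _ : Fin (n+1) => Bool)).sum_comp]
    simp [Fin.snocEquiv, Fintype.sum_prod_type, two_mul]
  have key : ∀ j, ∑ ω : Fin n → Bool, |f (X n ω * t j) - f (X n ω)| ≤
      √2 ^ n * √(qN μ N (t j)) := by
    intro j
    have h1 := sq_sum_le_card_mul_sum_sq (s := (Finset.univ : Finset (Fin n → Bool)))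
      (f := fun ω => |f (X n ω * t j) - f (X n ω)|)
    have h2 : ∑ ω : Fin n → Bool, |f (X n ω * t j) - f (X n ω)| ^ 2 ≤ qN μ N (t j) := by
      have hsum := q_hasSum hp hs N (t j)
      have := sum_le_hasSum (Finset.univ.map ⟨X n, hX n⟩) (fun x _ => sq_nonneg _) hsum
      simpa [sq_abs] using this
    have h3 : (√2 ^ n) ^ 2 = (2:ℝ) ^ n := by
      rw [← pow_mul, mul_comm, pow_mul, Real.sq_sqrt (by norm_num)]
    apply le_of_sq_le_sq _ (by positivity)
    rw [mul_pow, h3, Real.sq_sqrt (q_nonneg hp hs N _)]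
    refine h1.trans ?_
    simp only [Finset.card_univ, Fintype.card_pi, Fintype.card_bool, Finset.prod_const,
      Fintype.card_fin]
    push_cast
    exact mul_le_mul_of_nonneg_left h2 (by positivity)
  have h1 : (∑ ω : Fin n → Bool, f (X n ω)) / 2 ^ n -
      (∑ ω : Fin (n+1) → Bool, f (X (n+1) ω)) / 2 ^ (n+1) =
      (∑ ω : Fin (n+1) → Bool, (f (X n (Fin.init ω)) - f (X (n+1) ω))) / 2 ^ (n+1) := by
    rw [Finset.sum_sub_distrib, sum_init (fun ω => f (X n ω))]
    field_simp
    ring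
  have h2 : ∑ ω : Fin (n+1) → Bool, (f (X n (Fin.init ω)) - f (X (n+1) ω)) ≤
      ∑ ω : Fin (n+1) → Bool, ∑ j, |f (X n (Fin.init ω) * t j) - f (X n (Fin.init ω))| := by
    refine Finset.sum_le_sum fun ω _ => ?_
    obtain ⟨j, hj⟩ := hstep n ω
    rw [hj]
    refine le_trans ?_ (Finset.single_le_sum
      (f := fun j => |f (X n (Fin.init ω) * t j) - f (X n (Fin.init ω))|)
      (fun j _ => abs_nonneg _) (Finset.mem_univ j))
    rw [abs_sub_comm]; exact le_abs_self _
  rw [sum_init (fun ω => ∑ j, |f (X n ω * t j) - f (X n ω)|), Finset.sum_comm] at h2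
  have h3 : ∑ j, ∑ ω : Fin n → Bool, |f (X n ω * t j) - f (X n ω)| ≤
      √2 ^ n * ∑ j, √(qN μ N (t j)) := by
    rw [Finset.mul_sum]; exact Finset.sum_le_sum fun j _ => key j
  rw [h1, div_le_iff₀ (by positivity)]
  refine (h2.trans (mul_le_mul_of_nonneg_left h3 (by norm_num))).trans (le_of_eq ?_)
  have h4 : (√2⁻¹ : ℝ) ^ n * 2 ^ n = √2 ^ n := by
    rw [← mul_pow]; congr 1
    rw [Real.sqrt_inv]
    have : (√2 : ℝ) * √2 = 2 := Real.mul_self_sqrt (by norm_num)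
    field_simp; linarith
  rw [pow_succ, ← h4]; ring

lemma transient (hG : NonElemHyperbolic G) (hp : IsProbDensity μ) (hs : IsSymmetric μ)
    (hg : GeneratesSupp μ) : Transient μ := by
  obtain ⟨t, X, hX, hX0, hstep⟩ := exists_tree hG
  choose K hK0 hK using fun j => q_bound hp hs hg (t j)
  set r : ℝ := √2⁻¹ with hr
  have hr0 : 0 ≤ r := Real.sqrt_nonneg _
  have hr1 : r < 1 := by
    rw [hr, Real.sqrt_lt' one_pos]; norm_num
  have bound : ∀ N, fN μ N (1:G) ≤ ((∑ j, √(K j)) * (1 - r)⁻¹) ^ 2 := by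
    intro N
    set B := ∑ j, √(qN μ N (t j)) with hB
    have hB0 : 0 ≤ B := Finset.sum_nonneg fun j _ => Real.sqrt_nonneg _
    have tele : ∀ n, fN μ N (1:G) ≤ (∑ ω : Fin n → Bool, fN μ N (X n ω)) / 2 ^ n +
        B * ∑ k ∈ Finset.range n, r ^ k := by
      intro n
      induction n with
      | zero => simp [hX0]
      | succ n ih =>
        have := avg_step hp hs N t X hX hstep n
        rw [Finset.sum_range_succ, mul_add]
        rw [← hB, ← hr] at this
        linarith
    have avg : ∀ n, (∑ ω : Fin n → Bool, fN μ N (X n ω)) / 2 ^ n ≤ N * (1/2) ^ n := by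
      intro n
      have := sum_le_hasSum (Finset.univ.map ⟨X n, hX n⟩) (fun x _ => fN_nonneg hp N x)
        (fN_hasSum hp N)
      rw [Finset.sum_map] at this
      simp only [Function.Embedding.coeFn_mk] at this
      rw [one_div, inv_pow, ← div_eq_mul_inv]
      gcongr
    have le1 : ∀ n, fN μ N (1:G) ≤ N * (1/2) ^ n + B * (1 - r)⁻¹ := by
      intro n
      refine (tele n).trans (add_le_add (avg n) (mul_le_mul_of_nonneg_left ?_ hB0))
      rw [← tsum_geometric_of_lt_one hr0 hr1]
      exact (summable_geometric_of_lt_one hr0 hr1).sum_le_tsum _ (fun i _ => pow_nonneg hr0 i)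
    have le2 : fN μ N (1:G) ≤ B * (1 - r)⁻¹ := by
      have lim : Tendsto (fun n : ℕ => (N : ℝ) * (1/2) ^ n + B * (1 - r)⁻¹) atTop
          (𝓝 ((N : ℝ) * 0 + B * (1 - r)⁻¹)) :=
        ((tendsto_pow_atTop_nhds_zero_of_lt_one (by norm_num) (by norm_num)).const_mul _).add_const _
      have := ge_of_tendsto' lim le1
      simpa using this
    have hf0 := fN_nonneg hp N (1:G)
    have hBle : B ≤ (∑ j, √(K j)) * √(fN μ N 1) := by
      rw [Finset.sum_mul]
      refine Finset.sum_le_sum fun j _ => ?_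
      rw [← Real.sqrt_mul (hK0 j)]
      exact Real.sqrt_le_sqrt (hK j N)
    have hr2 : 0 ≤ (1 - r)⁻¹ := inv_nonneg.2 (by linarith)
    have le3 : √(fN μ N 1) * √(fN μ N 1) ≤ ((∑ j, √(K j)) * (1 - r)⁻¹) * √(fN μ N (1:G)) := by
      rw [Real.mul_self_sqrt hf0]
      refine le2.trans ?_
      calc _ ≤ (∑ j, √(K j)) * √(fN μ N 1) * (1 - r)⁻¹ := mul_le_mul_of_nonneg_right hBle hr2
        _ = _ := by ring
    have hK' : 0 ≤ (∑ j, √(K j)) * (1 - r)⁻¹ :=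
      mul_nonneg (Finset.sum_nonneg fun j _ => Real.sqrt_nonneg _) hr2
    have le4 : √(fN μ N (1:G)) ≤ (∑ j, √(K j)) * (1 - r)⁻¹ := by
      rcases (Real.sqrt_nonneg (fN μ N (1:G))).eq_or_lt with h | h
      · rw [← h]; exact hK'
      · exact le_of_mul_le_mul_right le3 h
    calc fN μ N (1:G) = √(fN μ N 1) ^ 2 := (Real.sq_sqrt hf0).symm
      _ ≤ _ := pow_le_pow_left₀ (Real.sqrt_nonneg _) le4 2
  exact summable_of_sum_range_le (fun n => convPow_nonneg hp n 1) bound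

/-- uniform domination -/
lemma convPow_dom (hp : IsProbDensity μ) (hs : IsSymmetric μ) (j k : ℕ) (g : G) :
    convPow μ (j + k) g ≤ convPow μ (j + j) 1 + convPow μ (k + k) 1 := by
  have h1 := corr hp hs j k g
  have h2 := corr hp hs j j 1
  have h3 := ((Equiv.mulRight g).hasSum_iff).2 (corr hp hs k k 1)
  refine hasSum_le ?_ h1 (h2.add h3)
  intro x
  simp only [Function.comp, Equiv.coe_mulRight, mul_one]
  nlinarith [sq_nonneg (convPow μ j x - convPow μ k (x * g)), sq_nonneg (convPow μ j x),
    sq_nonneg (convPow μ k (x * g))]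

/-- the dominating sequence -/
def domSeq (μ : G → ℝ) (n : ℕ) : ℝ :=
  convPow μ (n / 2 + n / 2) 1 + convPow μ ((n - n / 2) + (n - n / 2)) 1

lemma convPow_le_dom (hp : IsProbDensity μ) (hs : IsSymmetric μ) (n : ℕ) (g : G) :
    convPow μ n g ≤ domSeq μ n := by
  have := convPow_dom hp hs (n / 2) (n - n / 2) g
  rwa [show n / 2 + (n - n / 2) = n by omega] at this

lemma domSeq_summable (ht : Transient μ) : Summable (domSeq μ) := by
  have h1 : Summable fun k : ℕ => convPow μ (k + k) (1:G) :=
    ht.comp_injective (i := fun k : ℕ => k + k) (fun a b h => by simp only at h; omega)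
  have h2 : Summable fun k : ℕ => convPow μ (k + 1 + (k + 1)) (1:G) :=
    ht.comp_injective (i := fun k : ℕ => k + 1 + (k + 1)) (fun a b h => by simp only at h; omega)
  have he : Summable fun k : ℕ => domSeq μ (2 * k) := by
    refine (h1.add h1).congr fun k => ?_
    simp only [domSeq]
    rw [show 2 * k / 2 = k by omega, show 2 * k - k = k by omega]
  have ho : Summable fun k : ℕ => domSeq μ (2 * k + 1) := by
    refine (h1.add h2).congr fun k => ?_
    simp only [domSeq]
    rw [show (2 * k + 1) / 2 = k by omega, show 2 * k + 1 - k = k + 1 by omega]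
  exact (he.hasSum.even_add_odd ho.hasSum).summable

lemma green_summable (hp : IsProbDensity μ) (hs : IsSymmetric μ) (ht : Transient μ) (g : G) :
    Summable fun n => convPow μ n g :=
  Summable.of_nonneg_of_le (fun n => convPow_nonneg hp n g) (fun n => convPow_le_dom hp hs n g)
    (domSeq_summable ht)

lemma green_tendsto (hp : IsProbDensity μ) (hs : IsSymmetric μ) (ht : Transient μ) :
    Tendsto (fun g : G => greenFn μ 1 g) cofinite (𝓝 0) := by
  have := tendsto_tsum_of_dominated_convergence (f := fun (g : G) (n : ℕ) => convPow μ n g)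
    (g := fun _ => (0:ℝ)) (𝓕 := cofinite) (domSeq_summable ht)
    (fun n => (convPow_hasSum hp n).summable.tendsto_cofinite_zero)
    (Eventually.of_forall fun g n => by
      rw [Real.norm_of_nonneg (convPow_nonneg hp n g)]; exact convPow_le_dom hp hs n g)
  simpa [greenFn] using this

end


section lists
/-! ### sums over paths -/

lemma tsum_pair {α β : Type*} (f : α × β → ℝ≥0∞) : ∑' p, f p = ∑' a, ∑' b, f (a, b) :=
  ENNReal.tsum_prod (f := fun a b => f (a, b))

/-- weight of a list -/
def wt (m : G → ℝ≥0∞) (l : List G) : ℝ≥0∞ := (l.map m).prod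

lemma wt_append (m : G → ℝ≥0∞) (l l' : List G) : wt m (l ++ l') = wt m l * wt m l' := by
  simp [wt]

lemma fh_nil (x y : G) : IsFirstHitPath x y [] ↔ x = y := by
  simp [IsFirstHitPath, walkPositions]

lemma fh_cons (x y a : G) (l : List G) :
    IsFirstHitPath x y (a :: l) ↔ x ≠ y ∧ IsFirstHitPath (x * a) y l := by
  have hne : l.scanl (fun p a => p * a) (x * a) ≠ [] := by
    cases l <;> simp
  simp only [IsFirstHitPath, walkPositions, List.scanl_cons]
  rw [List.dropLast_cons_of_ne_nil hne, List.getLast?_cons, List.mem_cons]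
  rcases h : (l.scanl (fun p a => p * a) (x * a)).getLast? with _ | b
  · rw [List.getLast?_eq_none_iff] at h; exact absurd h hne
  · simp only [Option.getD_some]
    constructor
    · rintro ⟨h1, h2⟩
      push Not at h2
      exact ⟨fun h => h2.1 h.symm, h1, h2.2⟩
    · rintro ⟨h0, h1, h2⟩
      exact ⟨h1, fun h => h.elim (fun h => h0 h.symm) h2⟩

lemma fh_prod (y : G) (l : List G) : ∀ x, IsFirstHitPath x y l → x * l.prod = y := by
  induction l with
  | nil => intro x h; simpa [fh_nil] using h
  | cons a l ih =>
    intro x h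
    rw [fh_cons] at h
    rw [List.prod_cons, ← mul_assoc]
    exact ih _ h.2

lemma fh_unique (y : G) (l : List G) : ∀ x l' k k', IsFirstHitPath x y l → IsFirstHitPath x y l' →
    l ++ k = l' ++ k' → l = l' := by
  induction l with
  | nil =>
    intro x l' k k' h h' _
    cases l' with
    | nil => rfl
    | cons a l' => rw [fh_nil] at h; rw [fh_cons] at h'; exact absurd h h'.1
  | cons a l ih =>
    intro x l' k k' h h' e
    cases l' with
    | nil => rw [fh_nil] at h'; rw [fh_cons] at h; exact absurd h' h.1
    | cons b l' =>
      rw [fh_cons] at h h'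
      simp only [List.cons_append, List.cons.injEq] at e
      obtain ⟨rfl, e⟩ := e
      rw [ih _ _ _ _ h.2 h'.2 e]

lemma fh_exists (y : G) (l : List G) : ∀ x, x * l.prod = y →
    ∃ l₁ l₂, IsFirstHitPath x y l₁ ∧ l = l₁ ++ l₂ := by
  induction l with
  | nil => intro x h; exact ⟨[], [], by simpa [fh_nil] using h, rfl⟩
  | cons a l ih =>
    intro x h
    by_cases hx : x = y
    · exact ⟨[], a :: l, by simpa [fh_nil] using hx, rfl⟩
    · obtain ⟨l₁, l₂, h1, h2⟩ := ih (x * a) (by rw [mul_assoc]; simpa using h)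
      exact ⟨a :: l₁, l₂, by rw [fh_cons]; exact ⟨hx, h1⟩, by simp [h2]⟩

open scoped Classical in
/-- Green function as a sum over paths -/
def LG (m : G → ℝ≥0∞) (x y : G) : ℝ≥0∞ := ∑' l : List G, if x * l.prod = y then wt m l else 0

open scoped Classical in
/-- hitting probability -/
def FE (m : G → ℝ≥0∞) (x y : G) : ℝ≥0∞ := ∑' l : {l : List G // IsFirstHitPath x y l}, wt m l

open scoped Classical in
lemma cE_list (m : G → ℝ≥0∞) (n : ℕ) : ∀ g : G, cE m n g =
    ∑' l : List G, if l.length = n ∧ l.prod = g then wt m l else 0 := by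
  induction n with
  | zero =>
    intro g
    rw [tsum_eq_single []]
    · simp [cE, wt, eq_comm]
    · intro l hl; simp [hl]
  | succ n ih =>
    intro g
    have hinj : Function.Injective (fun p : G × List G => p.1 :: p.2) := by
      rintro ⟨a, l⟩ ⟨b, k⟩ h; simpa using h
    rw [add_comm n 1, cE_add, ← hinj.tsum_eq, tsum_pair]
    · refine tsum_congr fun y => ?_
      rw [cE_one, ih, ← ENNReal.tsum_mul_left]
      refine tsum_congr fun l => ?_
      have : (l.length = n ∧ l.prod = y⁻¹ * g) ↔ ((y :: l).length = 1 + n ∧ (y :: l).prod = g) := by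
        rw [List.prod_cons, List.length_cons, eq_inv_mul_iff_mul_eq, add_comm 1 n, add_left_inj]
      by_cases hc : l.length = n ∧ l.prod = y⁻¹ * g
      · rw [if_pos hc, if_pos (this.1 hc)]; simp [wt]
      · rw [if_neg hc, if_neg (fun h => hc (this.2 h)), mul_zero]
    · intro l hl
      cases l with
      | nil =>
        refine absurd hl ?_
        rw [Function.mem_support, not_not]
        refine if_neg fun h => ?_
        have := h.1
        simp only [List.length_nil] at this
        omega
      | cons a l => exact ⟨(a, l), rfl⟩

lemma LG_eq (m : G → ℝ≥0∞) (x y : G) : LG m x y = ∑' n, cE m n (x⁻¹ * y) := by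
  classical
  simp_rw [cE_list]
  rw [ENNReal.tsum_comm, LG]
  refine tsum_congr fun l => ?_
  rw [tsum_eq_single l.length]
  · simp [eq_inv_mul_iff_mul_eq]
  · intro n hn; simp [hn.symm]

lemma FE_mul_aux (m : G → ℝ≥0∞) (x y z : G) : ∃ (f : List G → ℝ≥0∞),
    LG m x z = ∑' l, f l ∧ (∀ l, f l ≠ 0 → x * l.prod = z) ∧ FE m x y * LG m y z =
    ∑' p : {l : List G // IsFirstHitPath x y l} × List G, f (p.1.1 ++ p.2) := by
  classical
  refine ⟨fun l => if x * l.prod = z then wt m l else 0, rfl, fun l hl => ?_, ?_⟩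
  · by_contra h; simp [h] at hl
  rw [tsum_pair, FE, ← ENNReal.tsum_mul_right]
  refine tsum_congr fun l => ?_
  rw [LG, ← ENNReal.tsum_mul_left]
  refine tsum_congr fun k => ?_
  have := fh_prod _ _ _ l.2
  dsimp only
  rw [List.prod_append, ← mul_assoc, this, wt_append]
  simp

lemma app_inj (x y : G) : Function.Injective
    (fun p : {l : List G // IsFirstHitPath x y l} × List G => p.1.1 ++ p.2) := by
  rintro ⟨⟨l, hl⟩, k⟩ ⟨⟨l', hl'⟩, k'⟩ h
  have := fh_unique _ _ _ _ _ _ hl hl' h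
  subst this
  simpa using h

lemma FE_mul_le (m : G → ℝ≥0∞) (x y z : G) : FE m x y * LG m y z ≤ LG m x z := by
  obtain ⟨f, h1, _, h2⟩ := FE_mul_aux m x y z
  rw [h1, h2]
  exact ENNReal.tsum_comp_le_tsum_of_injective (app_inj x y) f

lemma FE_mul_eq (m : G → ℝ≥0∞) (x y : G) : FE m x y * LG m y y = LG m x y := by
  obtain ⟨f, h1, h3, h2⟩ := FE_mul_aux m x y y
  rw [h1, h2]
  refine (app_inj x y).tsum_eq fun l hl => ?_
  obtain ⟨l₁, l₂, h, rfl⟩ := fh_exists y l x (h3 l hl)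
  exact ⟨(⟨l₁, h⟩, l₂), rfl⟩

end lists

section green
variable {μ : G → ℝ}

lemma wt_toReal (hp : IsProbDensity μ) (l : List G) : (wt (mE μ) l).toReal = (l.map μ).prod := by
  induction l with
  | nil => simp [wt]
  | cons a l ih =>
    simp only [wt, List.map_cons, List.prod_cons, ENNReal.toReal_mul] at ih ⊢
    rw [ih, mE, ENNReal.toReal_ofReal (hp.1 a)]

lemma wt_ne_top (l : List G) : wt (mE μ) l ≠ ∞ := by
  induction l with
  | nil => simp [wt]
  | cons a l ih =>
    simp only [wt, List.map_cons, List.prod_cons] at ih ⊢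
    exact ENNReal.mul_ne_top ENNReal.ofReal_ne_top ih

lemma hitProb_eq (hp : IsProbDensity μ) (x y : G) : hitProb μ x y = (FE (mE μ) x y).toReal := by
  rw [FE, ENNReal.tsum_toReal_eq (fun _ => wt_ne_top _), hitProb]
  exact tsum_congr fun l => (wt_toReal hp _).symm

lemma greenFn_eq (hp : IsProbDensity μ) (x y : G) : greenFn μ x y = (LG (mE μ) x y).toReal := by
  rw [LG_eq, ENNReal.tsum_toReal_eq (fun _ => cE_ne_top hp _ _), greenFn]
  exact tsum_congr fun n => convPow_eq hp n _

lemma greenFn_li (x y : G) : greenFn μ x y = greenFn μ 1 (x⁻¹ * y) := by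
  simp [greenFn]

lemma greenFn_symm (hp : IsProbDensity μ) (hs : IsSymmetric μ) (x y : G) :
    greenFn μ x y = greenFn μ y x := by
  unfold greenFn
  refine tsum_congr fun n => ?_
  rw [← convPow_symm hp hs]; congr 1; group

lemma greenFn_one_le (hp : IsProbDensity μ) (hs : IsSymmetric μ) (ht : Transient μ) :
    1 ≤ greenFn μ 1 1 := by
  have := (green_summable hp hs ht (1⁻¹ * 1 : G)).le_tsum 0 (fun n _ => convPow_nonneg hp n _)
  refine le_trans ?_ this
  simp [convPow]

lemma LG_ne_top (hp : IsProbDensity μ) (hs : IsSymmetric μ) (ht : Transient μ) (x y : G) :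
    LG (mE μ) x y ≠ ∞ := by
  rw [LG_eq]
  have := green_summable hp hs ht (x⁻¹ * y)
  simp_rw [convPow_eq hp] at this
  intro h
  have h2 : ∀ n, cE (mE μ) n (x⁻¹ * y) = ENNReal.ofReal (cE (mE μ) n (x⁻¹ * y)).toReal :=
    fun n => (ENNReal.ofReal_toReal (cE_ne_top hp _ _)).symm
  rw [tsum_congr h2] at h
  exact this.tsum_ofReal_ne_top h

lemma greenFn_pos (hp : IsProbDensity μ) (hs : IsSymmetric μ) (hg : GeneratesSupp μ)
    (ht : Transient μ) (x y : G) : 0 < greenFn μ x y := by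
  classical
  rw [greenFn_eq hp]
  refine ENNReal.toReal_pos ?_ (LG_ne_top hp hs ht x y)
  obtain ⟨l, hl, hprod⟩ := exists_list_closure _ hg (x⁻¹ * y)
  intro h
  rw [LG, ENNReal.tsum_eq_zero] at h
  have h := h l
  rw [if_pos (by rw [hprod]; group)] at h
  have h2 := wt_toReal hp l
  rw [h, ENNReal.toReal_zero, eq_comm, List.prod_eq_zero_iff, List.mem_map] at h2
  obtain ⟨a, ha, h0⟩ := h2
  rcases hl a ha with h3 | h3
  · exact h3 h0
  · exact h3 (by rw [hs, h0])

lemma green_hit (hp : IsProbDensity μ) (x y : G) :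
    greenFn μ x y = hitProb μ x y * greenFn μ 1 1 := by
  have : greenFn μ 1 1 = greenFn μ y y := by simp [greenFn]
  rw [this, greenFn_eq hp, greenFn_eq hp, hitProb_eq hp, ← ENNReal.toReal_mul, FE_mul_eq]

lemma green_tri (hp : IsProbDensity μ) (hs : IsSymmetric μ) (ht : Transient μ) (x y z : G) :
    hitProb μ x y * greenFn μ y z ≤ greenFn μ x z := by
  rw [greenFn_eq hp, greenFn_eq hp, hitProb_eq hp, ← ENNReal.toReal_mul]
  exact ENNReal.toReal_mono (LG_ne_top hp hs ht x z) (FE_mul_le _ _ _ _)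

lemma greenDist_eq (hp : IsProbDensity μ) (hs : IsSymmetric μ)  (hg : GeneratesSupp μ)
    (ht : Transient μ) (x y : G) :
    greenDist μ x y = Real.log (greenFn μ 1 1) - Real.log (greenFn μ x y) := by
  have h1 := greenFn_one_le hp hs ht
  have h2 := greenFn_pos hp hs hg ht x y
  have h3 : hitProb μ x y = greenFn μ x y / greenFn μ 1 1 := by
    rw [green_hit hp x y]; field_simp
  rw [greenDist, h3, Real.log_div h2.ne' (by linarith)]; ring

lemma green_exp (hp : IsProbDensity μ) (hs : IsSymmetric μ)  (hg : GeneratesSupp μ)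
    (ht : Transient μ) (x y : G) :
    greenFn μ x y = greenFn μ 1 1 * Real.exp (- greenDist μ x y) := by
  have h1 := greenFn_one_le hp hs ht
  have h2 := greenFn_pos hp hs hg ht x y
  rw [greenDist_eq hp hs hg ht, neg_sub, Real.exp_sub, Real.exp_log h2, Real.exp_log (by linarith)]
  field_simp

lemma greenDist_pm (hp : IsProbDensity μ) (hs : IsSymmetric μ)  (hg : GeneratesSupp μ)
    (ht : Transient μ) : IsPM (greenDist μ) where
  refl x := by
    rw [greenDist_eq hp hs hg ht, greenFn_li x x]; simp
  symm x y := by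
    rw [greenDist_eq hp hs hg ht, greenDist_eq hp hs hg ht, greenFn_symm hp hs x y]
  tri x y z := by
    have h1 := greenFn_one_le hp hs ht
    have h2 := greenFn_pos hp hs hg ht
    have h := green_tri hp hs ht x y z
    have h3 : hitProb μ x y = greenFn μ x y / greenFn μ 1 1 := by
      rw [green_hit hp x y]; field_simp
    rw [h3] at h
    have h4 := Real.log_le_log (by have := h2 x y; have := h2 y z; positivity) h
    rw [Real.log_mul (by have := h2 x y; positivity) (h2 y z).ne', Real.log_div (h2 x y).ne'
      (by linarith)] at h4
    rw [greenDist_eq hp hs hg ht, greenDist_eq hp hs hg ht, greenDist_eq hp hs hg ht]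
    linarith

lemma greenDist_li (hp : IsProbDensity μ) (hs : IsSymmetric μ)  (hg : GeneratesSupp μ)
    (ht : Transient μ) : LeftInvariant (greenDist μ) := by
  intro g x y
  rw [greenDist_eq hp hs hg ht, greenDist_eq hp hs hg ht, greenFn_li (g * x), greenFn_li x y]
  simp [mul_assoc]

lemma green_ball_finite (hp : IsProbDensity μ) (hs : IsSymmetric μ)  (hg : GeneratesSupp μ)
    (ht : Transient μ) (K : ℝ) : {g | greenDist μ 1 g ≤ K}.Finite := by
  have h := green_tendsto hp hs ht
  have h1 := greenFn_one_le hp hs ht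
  have h2 : ∀ᶠ g in cofinite, greenFn μ 1 g < greenFn μ 1 1 * Real.exp (-K) :=
    h.eventually_lt_const (by positivity)
  rw [Filter.eventually_cofinite] at h2
  refine h2.subset fun g hg' => ?_
  simp only [mem_ofPred_eq, not_lt] at hg' ⊢
  rw [green_exp hp hs hg ht 1 g]
  gcongr

end green


section geom
/-! ### coarse geometry -/

lemma upper_bound (S : Finset G) (hS : Generates S) {d : G → G → ℝ} (pm : IsPM d)
    (li : LeftInvariant d) : ∃ Λ : ℝ, 1 ≤ Λ ∧ ∀ x y, d x y ≤ Λ * wordDist S x y := by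
  have hnn : ∀ s ∈ S, 0 ≤ d 1 s := fun s _ => pm.nonneg _ _
  refine ⟨1 + ∑ s ∈ S, d 1 s, by linarith [Finset.sum_nonneg hnn], ?_⟩
  set Λ := 1 + ∑ s ∈ S, d 1 s with hΛ
  have hs : ∀ s ∈ S, d 1 s ≤ Λ := fun s h => by
    linarith [Finset.single_le_sum hnn h]
  have key : ∀ l : List G, (∀ a ∈ l, a ∈ S ∨ a⁻¹ ∈ S) → d 1 l.prod ≤ Λ * l.length := by
    intro l
    induction l with
    | nil => intro _; simp [pm.refl]
    | cons a l ih =>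
      intro h
      have h1 := ih fun b hb => h b (by simp [hb])
      have h2 := pm.tri 1 a (a * l.prod)
      have h3 : d a (a * l.prod) = d 1 l.prod := by
        have := li a 1 l.prod; rwa [mul_one] at this
      have h4 : d 1 a ≤ Λ := by
        rcases h a (by simp) with h | h
        · exact hs a h
        · have := li a 1 a⁻¹
          rw [mul_one, mul_inv_cancel] at this
          rw [pm.symm, this]; exact hs _ h
      rw [List.prod_cons, List.length_cons]; push_cast
      linarith
  intro x y
  obtain ⟨l, l1, l2, l3⟩ := exists_min_word S hS (x⁻¹ * y)
  have := key l l2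
  rw [l3, l1] at this
  have e := li x⁻¹ x y
  rw [inv_mul_cancel] at e
  rw [← e]; exact this

lemma hyp_of_QR (S : Finset G) (hS : Generates S) {d : G → G → ℝ} (pm : IsPM d) {δ : ℝ}
    (h : IsHyperbolicWith (wordDist S) δ) 
    (hQ : ∀ C : ℝ, ∃ K, ∀ q x y, gromov (wordDist S) q x y ≤ C → gromov d q x y ≤ K) :
    IsHyperbolic d := by
  obtain ⟨K, hK⟩ := hQ (1 + δ)
  obtain ⟨K', hK'⟩ := hQ δ
  have wp := wordDist_pm S hS
  have main : ∀ w x y z : G, gromov (wordDist S) w x y ≤ gromov (wordDist S) w x z →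
      gromov d w x y - (K + 2 * K') ≤ gromov d w y z := by
    intro w x y z hle
    obtain ⟨n, i, p, -, -, -, -, h1, h2⟩ := exists_on_geod S hS w x (gromov (wordDist S) w x y)
      (gromov_nonneg wp _ _ _) (gromov_le wp _ _ _)
    set q := p i
    set t := gromov (wordDist S) w x y with ht
    have f1 := Nat.floor_le (gromov_nonneg wp w x y : 0 ≤ t)
    have f2 := Nat.lt_floor_add_one t
    have hy := proj_pt h wp w x y q _ h1 h2 f1
    have hz := proj_pt h wp w x z q _ h1 h2 (f1.trans hle)
    have a1 : gromov d q w y ≤ K' := hK' _ _ _ (by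
      unfold gromov; rw [wp.symm y q]; linarith)
    have a2 : gromov d q w z ≤ K' := hK' _ _ _ (by
      unfold gromov; rw [wp.symm z q]; linarith)
    have a3 : gromov d q x y ≤ K := hK _ _ _ (by
      have ht' := ht
      unfold gromov at ht'
      unfold gromov
      rw [wp.symm x w, wp.symm y w] at ht'
      rw [wp.symm x q, wp.symm y q]; linarith)
    unfold gromov at a1 a2 a3 ⊢
    have t1 := pm.tri y q z
    have t2 := pm.tri x q w
    have t3 := pm.tri y q w
    have := pm.symm w q
    have := pm.symm z q
    have := pm.symm y w
    have := pm.symm z w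
    linarith
  refine ⟨|K + 2 * K'|, abs_nonneg _, fun w x y z => ?_⟩
  have ha := le_abs_self (K + 2 * K')
  rcases le_total (gromov (wordDist S) w x y) (gromov (wordDist S) w x z) with hl | hl
  · have := main w x y z hl
    have := min_le_left (gromov d w x y) (gromov d w x z)
    linarith
  · have := main w x z y hl
    have := min_le_right (gromov d w x y) (gromov d w x z)
    rw [gromov_symm pm w y z]
    linarith

lemma QR_gromov (S : Finset G) (hS : Generates S) {d : G → G → ℝ} (li : LeftInvariant d)
    (pm : IsPM d) {δ : ℝ} (hδ : 0 ≤ δ) (h : IsHyperbolicWith (wordDist S) δ) 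
    (hQ : ∀ r : ℝ, 0 ≤ r → ∃ K, ∀ γ γ', NearWordGeodesic S 1 γ γ' r → 
      d 1 γ' + d γ' γ ≤ d 1 γ + K) (C : ℝ) :
    ∃ K, ∀ q x y, gromov (wordDist S) q x y ≤ C → gromov d q x y ≤ K := by
  have wp := wordDist_pm S hS
  obtain ⟨K, hK⟩ := hQ (|C| + 2 * δ + 1) (by positivity)
  have main : ∀ q y, gromov (wordDist S) q 1 y ≤ C → gromov d q 1 y ≤ K / 2 := by
    intro q y hC
    obtain ⟨n, i, p, hp, p0, pn, hi, h1, h2⟩ := exists_on_geod S hS 1 y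
      (gromov (wordDist S) 1 q y) (gromov_nonneg wp _ _ _)
      (by rw [gromov_symm wp]; exact gromov_le wp _ _ _)
    have f1 := Nat.floor_le (gromov_nonneg wp 1 q y)
    have f2 := Nat.lt_floor_add_one (gromov (wordDist S) 1 q y)
    have := near_of_gromov h wp 1 y q (p i) (by rw [h1, h2]; ring)
      (by rw [h1, abs_le]; constructor <;> linarith)
    have := hK y q ⟨n, p, hp, p0, pn, i, hi, by linarith [le_abs_self C]⟩
    unfold gromov
    rw [pm.symm y q]; linarith
  refine ⟨K / 2, fun q x y hC => ?_⟩
  have e1 := gromov_li (wordDist_li S) x⁻¹ q x y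
  have e2 := gromov_li li x⁻¹ q x y
  rw [inv_mul_cancel] at e1 e2
  rw [← e2]
  exact main _ _ (e1.trans_le hC)

lemma lower_bound (S : Finset G) (hS : Generates S) {d : G → G → ℝ} (pm : IsPM d)
    (li : LeftInvariant d) (hfin : ∀ K, {g | d 1 g ≤ K}.Finite) 
    (hq : QuasiIsometric d (wordDist S)) :
    ∃ M : ℝ, 1 ≤ M ∧ ∀ x y, wordDist S x y ≤ M * (d x y + 1) := by
  obtain ⟨f, Λ, c, C, hΛ, hc, hC, hqi, hsurj⟩ := hq
  choose s hs using hsurj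
  have wp := wordDist_pm S hS
  obtain ⟨B, hB⟩ := ((hfin (Λ * (2 * C + 1 + c))).image (fun g => wordDist S 1 g)).bddAbove
  set M := max B 0 with hM
  have hM0 : 0 ≤ M := le_max_right _ _
  have hball : ∀ x y, d x y ≤ Λ * (2 * C + 1 + c) → wordDist S x y ≤ M := by
    intro x y h
    have e1 := li x⁻¹ x y
    have e2 := wordDist_li S x⁻¹ x y
    rw [inv_mul_cancel] at e1 e2
    rw [← e2]
    exact (hB ⟨x⁻¹ * y, by simpa [e1] using h, rfl⟩).trans (le_max_left _ _)
  have hstep : ∀ x y, wordDist S (f x) (f y) ≤ 2 * C + 1 → wordDist S x y ≤ M := by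
    intro x y h
    apply hball
    have := (hqi x y).1
    have h2 : d x y / Λ ≤ 2 * C + 1 + c := by linarith
    rw [div_le_iff₀ (by linarith)] at h2
    linarith
  refine ⟨M * (Λ + c + 2) + 1, ?_, fun x y => ?_⟩
  · have : 0 ≤ M * (Λ + c + 2) := by positivity
    linarith
  obtain ⟨p, hp, p0, pn⟩ := exists_geod S hS (f x) (f y)
  set n := wordLength S ((f x)⁻¹ * f y) with hn
  have hch : ∀ k ≤ n, wordDist S (s (p 0)) (s (p k)) ≤ k * M := by
    intro k
    induction k with
    | zero => intro _; simp [wp.refl]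
    | succ k ih =>
      intro hk
      have h1 := ih (by omega)
      have h2 := wp.tri (s (p 0)) (s (p k)) (s (p (k + 1)))
      have h3 := hstep (s (p k)) (s (p (k + 1))) (by
        have a1 := wp.tri (f (s (p k))) (p k) (f (s (p (k+1))))
        have a2 := wp.tri (p k) (p (k+1)) (f (s (p (k+1))))
        have a3 := hs (p k)
        have a4 := hs (p (k+1))
        have a5 := hp k (k+1) (by omega) hk
        push_cast at a5
        rw [show (k : ℝ) - (k + 1) = -1 by ring] at a5
        norm_num at a5
        rw [wp.symm (f (s (p (k+1))))] at a4
        linarith)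
      push_cast; linarith
  have b1 := hstep x (s (p 0)) (by
    have := hs (p 0)
    rw [wp.symm] at this
    rw [p0] at this ⊢; linarith)
  have b2 := hstep (s (p n)) y (by
    have := hs (p n)
    rw [pn] at this ⊢; linarith)
  have b3 := hch n le_rfl
  have b4 : (n : ℝ) ≤ Λ * d x y + c := (hqi x y).2
  have t1 := wp.tri x (s (p 0)) y
  have t2 := wp.tri (s (p 0)) (s (p n)) y
  have hd := pm.nonneg x y
  have : (n : ℝ) * M ≤ (Λ * d x y + c) * M := mul_le_mul_of_nonneg_right b4 hM0
  have h5 : 0 ≤ M * c * d x y := by positivity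
  have h6 : 0 ≤ M * d x y := by positivity
  have h7 : 0 ≤ M * Λ := by positivity
  nlinarith

lemma one_side {X : Type*} {d : X → X → ℝ} {δ : ℝ} (h : IsHyperbolicWith d δ) (pm : IsPM d)
    (hδ : 0 ≤ δ) {Λ ε : ℝ} (hΛ : 1 ≤ Λ) (hε : 0 ≤ ε) (hε1 : ε ≤ 1) (L : ℕ) (hL : 1 ≤ L)
    (hLδ : δ * Λ ≤ ε * L) (a : ℕ → X) (m : ℕ)
    (hup : ∀ i j, i ≤ m → j ≤ m → d (a i) (a j) ≤ Λ * |(i : ℝ) - j|)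
    (hlo : ∀ i j, i ≤ m → j ≤ m → |(i : ℝ) - j| / Λ - 1 ≤ d (a i) (a j))
    (D : ℝ) (hD : 0 < D) (hDm : D ≤ d (a 0) (a m)) :
    ∃ i ≤ m, D ≤ d (a 0) (a i) ∧ d (a 0) (a i) ≤ D + Λ ∧
      (1 - ε) * D - (ε + Λ * L / 2 + δ) ≤ gromov d (a 0) (a i) (a m) := by
  classical
  have hex : ∃ i, ∀ k, i ≤ k → k ≤ m → D ≤ d (a 0) (a k) :=
    ⟨m, fun k h1 h2 => by rw [le_antisymm h2 h1]; exact hDm⟩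
  obtain ⟨hi, hmin⟩ : (∀ k, Nat.find hex ≤ k → k ≤ m → D ≤ d (a 0) (a k)) ∧ 
      ∀ j < Nat.find hex, ¬ ∀ k, j ≤ k → k ≤ m → D ≤ d (a 0) (a k) :=
    ⟨Nat.find_spec hex, fun j hj => Nat.find_min hex hj⟩
  have him : Nat.find hex ≤ m := Nat.find_min' hex
    (fun k h1 h2 => by rw [le_antisymm h2 h1]; exact hDm)
  set i := Nat.find hex
  have hcast : ∀ k l : ℕ, k ≤ l → |(k : ℝ) - l| = (l : ℝ) - k := fun k l hkl => by
    have : (k : ℝ) ≤ l := by exact_mod_cast hkl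
    rw [abs_sub_comm, abs_of_nonneg (by linarith)]
  refine ⟨i, him, hi i le_rfl him, ?_, ?_⟩
  · rcases Nat.eq_zero_or_pos i with h0 | h0
    · rw [h0, pm.refl]; linarith
    · have := hmin (i - 1) (by omega)
      push Not at this
      obtain ⟨k, k1, k2, k3⟩ := this
      have hk : k = i - 1 := by
        by_contra hne
        exact absurd (hi k (by omega) k2) (not_le.2 k3)
      have h1 := hup k i k2 him
      have h2 : (i : ℝ) = k + 1 := by
        have : i = k + 1 := by omega
        rw [this]; push_cast; ring
      rw [h2, show (k : ℝ) - (k + 1) = -1 by ring] at h1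
      norm_num at h1
      linarith [pm.tri (a 0) (a k) (a i)]
  have hd : ∀ j, i ≤ j → j ≤ m → (1 - ε) * D + ε * (j / Λ - 1) ≤ d (a 0) (a j) := by
    intro j j1 j2
    have h1 := hi j j1 j2
    have h2 := hlo 0 j (by omega) j2
    rw [hcast 0 j (by omega)] at h2
    push_cast at h2
    rw [sub_zero] at h2
    have := mul_le_mul_of_nonneg_left h1 (by linarith : 0 ≤ 1 - ε)
    have := mul_le_mul_of_nonneg_left h2 hε
    nlinarith
  have hnear : ∀ j k, i ≤ j → j ≤ k → k ≤ m → k ≤ j + L →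
      (1 - ε) * D + ε * (j / Λ) - (ε + Λ * L / 2) ≤ gromov d (a 0) (a j) (a k) := by
    intro j k h1 h2 h3 h4
    have b1 := hd j h1 (h2.trans h3)
    have b2 := hd k (h1.trans h2) h3
    have b3 := hup j k (h2.trans h3) h3
    rw [hcast j k h2] at b3
    have h4' : (k : ℝ) ≤ j + L := by exact_mod_cast h4
    have h2' : (j : ℝ) ≤ k := by exact_mod_cast h2
    have b4 : Λ * ((k : ℝ) - j) ≤ Λ * L := by
      apply mul_le_mul_of_nonneg_left <;> linarith
    have b5 : ε * ((j : ℝ) / Λ) ≤ ε * (k / Λ) := by gcongr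
    unfold gromov
    rw [pm.symm (a j) (a 0), pm.symm (a k) (a 0)]
    linarith
  have hLΛ : δ ≤ ε * (L / Λ) := by
    rw [← mul_div_assoc, le_div_iff₀ (by linarith)]; exact hLδ
  have ind : ∀ N j, m - j ≤ N → i ≤ j → j ≤ m → 
      (1 - ε) * D + ε * (j / Λ) - (ε + Λ * L / 2 + δ) ≤ gromov d (a 0) (a j) (a m) := by
    intro N
    induction N with
    | zero =>
      intro j h1 h2 h3
      have := hnear j m h2 h3 le_rfl (by omega)
      linarith
    | succ N ih =>
      intro j h1 h2 h3
      by_cases hjm : m ≤ j + L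
      · have := hnear j m h2 h3 le_rfl hjm
        linarith
      · have c1 := ih (j + L) (by omega) (by omega) (by omega)
        have c2 := hnear j (j + L) h2 (by omega) (by omega) le_rfl
        have c3 := h (a 0) (a (j + L)) (a j) (a m)
        rw [gromov_symm pm] at c2
        push_cast at c1
        rw [add_div, mul_add] at c1
        rcases min_cases (gromov d (a 0) (a (j + L)) (a j)) (gromov d (a 0) (a (j + L)) (a m)) with
          ⟨e, _⟩ | ⟨e, _⟩ <;> rw [e] at c3 <;> linarith
  have := ind (m - i) i le_rfl le_rfl him
  have h0 : 0 ≤ ε * ((i : ℝ) / Λ) := by positivity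
  linarith

lemma quasiruler (S : Finset G) {d : G → G → ℝ} (pm : IsPM d) {δ : ℝ}
    (hδ : 0 ≤ δ) (h : IsHyperbolicWith d δ) {Λ : ℝ} (hΛ : 1 ≤ Λ)
    (hup : ∀ x y, d x y ≤ Λ * wordDist S x y) 
    (hlo : ∀ x y, wordDist S x y ≤ Λ * (d x y + 1)) :
    ∃ τ : ℝ, ∀ n p m, IsWordGeodesic S n p → m ≤ n → gromov d (p m) (p 0) (p n) ≤ τ := by
  have hΛ0 : 0 < Λ := by linarith
  set ε : ℝ := 1 / (2 * Λ ^ 2) with hεd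
  have hε : 0 < ε := by positivity
  have hε1 : ε ≤ 1 := by
    rw [hεd, div_le_one (by positivity)]; nlinarith
  obtain ⟨L, hL⟩ := exists_nat_ge (max 1 (δ * Λ / ε))
  have hL1 : 1 ≤ L := by exact_mod_cast (le_max_left _ _).trans hL
  have hL2 : δ * Λ ≤ ε * L := by
    have := (le_max_right _ _).trans hL
    rw [div_le_iff₀ hε] at this; linarith
  set C0 := ε + Λ * L / 2 + δ with hC0
  refine ⟨max 0 (Λ ^ 2 * (2 * Λ + 2 * C0 + 4 * δ + 1)), fun n p m hp hm => ?_⟩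
  set D := gromov d (p m) (p 0) (p n) with hD
  rcases le_or_gt D 0 with hD0 | hD0
  · exact hD0.trans (le_max_left _ _)
  refine le_trans ?_ (le_max_right _ _)
  have up : ∀ i j, i ≤ n → j ≤ n → d (p i) (p j) ≤ Λ * |(i : ℝ) - j| := fun i j hi hj => by
    rw [← hp i j hi hj]; exact hup _ _
  have lo : ∀ i j, i ≤ n → j ≤ n → |(i : ℝ) - j| / Λ - 1 ≤ d (p i) (p j) := fun i j hi hj => by
    have := hlo (p i) (p j)
    rw [hp i j hi hj] at this
    rw [sub_le_iff_le_add, div_le_iff₀ hΛ0]; linarith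
  obtain ⟨i, hi, i1, i2, i3⟩ := one_side h pm hδ hΛ hε.le hε1 L hL1 hL2 (fun k => p (m - k)) m
    (fun i j hi hj => by
      refine (up (m - i) (m - j) (by omega) (by omega)).trans_eq ?_
      rw [Nat.cast_sub hi, Nat.cast_sub hj, abs_sub_comm]; congr 2; ring)
    (fun i j hi hj => by
      refine le_trans (le_of_eq ?_) (lo (m - i) (m - j) (by omega) (by omega))
      rw [Nat.cast_sub hi, Nat.cast_sub hj, abs_sub_comm]; congr 3; ring) D hD0 (by
      simpa using gromov_le pm (p m) (p 0) (p n))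
  obtain ⟨j, hj, j1, j2, j3⟩ := one_side h pm hδ hΛ hε.le hε1 L hL1 hL2 (fun k => p (m + k)) (n - m)
    (fun i j hi hj => by
      refine (up (m + i) (m + j) (by omega) (by omega)).trans_eq ?_
      push_cast; congr 2; ring)
    (fun i j hi hj => by
      refine le_trans (le_of_eq ?_) (lo (m + i) (m + j) (by omega) (by omega))
      push_cast; congr 3; ring) D hD0 (by
      simp only [Nat.add_zero, Nat.add_sub_cancel' hm]
      rw [hD, gromov_symm pm]; exact gromov_le pm (p m) (p n) (p 0))
  simp only [Nat.sub_zero, Nat.add_zero, Nat.sub_self, Nat.add_sub_cancel' hm] at i1 i2 i3 j1 j2 j3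
  set u := p (m - i)
  set v := p (m + j)
  set w := p m
  have g1 := h w (p 0) u (p n)
  have g2 := h w (p n) u v
  rw [gromov_symm pm w u] at i3
  rw [gromov_symm pm w v] at j3
  rw [gromov_symm pm w (p n) u] at g2
  have huv : (1 - ε) * D - C0 - 2 * δ ≤ gromov d w u v := by
    have hεD : 0 ≤ ε * D := by positivity
    have hC0p : 0 ≤ C0 := by positivity
    have m1 : (1 - ε) * D - C0 ≤ min (gromov d w (p 0) u) (gromov d w (p 0) (p n)) :=
      le_min i3 (by rw [← hD]; linarith)
    have m2 : (1 - ε) * D - C0 - δ ≤ min (gromov d w u (p n)) (gromov d w (p n) v) :=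
      le_min (by linarith) (by linarith)
    linarith
  unfold gromov at huv
  rw [pm.symm u w, pm.symm v w] at huv
  have l1 := lo (m - i) (m + j) (by omega) (by omega)
  have habs : |((m - i : ℕ) : ℝ) - ((m + j : ℕ) : ℝ)| = i + j := by
    rw [Nat.cast_sub hi, abs_sub_comm]; push_cast
    rw [show (m : ℝ) + j - (m - i) = i + j by ring, abs_of_nonneg (by positivity)]
  rw [habs] at l1
  have hi' : D ≤ Λ * i := by
    refine i1.trans ((up m (m - i) hm (by omega)).trans_eq ?_)
    rw [Nat.cast_sub hi, show (m : ℝ) - (m - i) = i by ring, abs_of_nonneg (by positivity)]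
  have hj' : D ≤ Λ * j := by
    refine j1.trans ((up m (m + j) hm (by omega)).trans_eq ?_)
    push_cast
    rw [show (m : ℝ) - (m + j) = -j by ring, abs_neg, abs_of_nonneg (by positivity)]
  have hlow : 2 * D / Λ ^ 2 ≤ (i + j : ℝ) / Λ := by
    rw [div_le_div_iff₀ (by positivity) hΛ0]
    nlinarith
  have hε2 : 2 * ε * D = D / Λ ^ 2 := by rw [hεd]; field_simp
  have e2 : 2 * D / Λ ^ 2 = 2 * (D / Λ ^ 2) := by ring
  have fin : D / Λ ^ 2 ≤ 2 * Λ + 2 * C0 + 4 * δ + 1 := by nlinarith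
  rw [div_le_iff₀ (by positivity)] at fin
  linarith

end geom

/-- **Proposition 3.5.**  The Green metric of a symmetric random walk on a non-elementary
hyperbolic group is quasi-isometric to the word metric and hyperbolic if and only if
(ED) the Green function decays exponentially in the word metric, and (QR) the Green
function is submultiplicative along word geodesics:
`G(e,γ) ≤ C(r) G(e,γ') G(γ',γ)` whenever `γ'` is within distance `r` of a word geodesic
from `e` to `γ`. -/
theorem green_hyperbolic_iff_ED_and_QR
    {G : Type*} [Group G] (hG : NonElemHyperbolic G)
    (S : Finset G) (hS : Generates S)
    (μ : G → ℝ) (hprob : IsProbDensity μ) (hsymm : IsSymmetric μ)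
    (hgen : GeneratesSupp μ) :
    (QuasiIsometric (greenDist μ) (wordDist S) ∧ IsHyperbolic (greenDist μ)) ↔
      ((∃ C₁ c₁ : ℝ, 0 < C₁ ∧ 0 < c₁ ∧
          ∀ γ : G, greenFn μ 1 γ ≤ C₁ * Real.exp (-c₁ * wordDist S 1 γ)) ∧
        ∀ r : ℝ, 0 ≤ r → ∃ C : ℝ, 0 < C ∧
          ∀ γ γ' : G, NearWordGeodesic S 1 γ γ' r →
            greenFn μ 1 γ ≤ C * greenFn μ 1 γ' * greenFn μ γ' γ) := by
  have ht : Transient μ := transient hG hprob hsymm hgen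
  have pm := greenDist_pm hprob hsymm hgen ht
  have li := greenDist_li hprob hsymm hgen ht
  have hex := green_exp hprob hsymm hgen ht
  have hA := greenFn_one_le hprob hsymm ht
  have wp := wordDist_pm S hS
  set A := greenFn μ 1 1 with hAd
  have hA0 : 0 < A := by linarith
  obtain ⟨Λ, hΛ, hup⟩ := upper_bound S hS pm li
  have hΛ0 : 0 < Λ := by linarith
  constructor
  · rintro ⟨hqi, δ, hδ, hyp⟩
    obtain ⟨M, hM, hlo⟩ := lower_bound S hS pm li (green_ball_finite hprob hsymm hgen ht) hqi
    have hM0 : 0 < M := by linarith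
    refine ⟨⟨A * Real.exp 1, 1 / M, by positivity, by positivity, fun γ => ?_⟩, fun r hr => ?_⟩
    · rw [hex 1 γ, mul_assoc, ← Real.exp_add]
      have h1 := hlo 1 γ
      have h2 : wordDist S 1 γ / M ≤ greenDist μ 1 γ + 1 := by
        rw [div_le_iff₀ hM0]; linarith
      refine mul_le_mul_of_nonneg_left (Real.exp_le_exp.2 ?_) hA0.le
      rw [neg_mul, one_div_mul_eq_div]; linarith
    · obtain ⟨τ, hτ⟩ := quasiruler S pm hδ hyp (Λ := max Λ M) (hΛ.trans (le_max_left _ _))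
        (fun x y => (hup x y).trans
          (mul_le_mul_of_nonneg_right (le_max_left _ _) (wp.nonneg _ _)))
        (fun x y => (hlo x y).trans
          (mul_le_mul_of_nonneg_right (le_max_right _ _) (by have := pm.nonneg x y; linarith)))
      refine ⟨Real.exp (2 * τ + 2 * Λ * r) / A, by positivity, ?_⟩
      rintro γ γ' ⟨n, p, hp, p0, pn, i, hi, hpi⟩
      have h1 := hτ n p i hp hi
      rw [p0, pn] at h1
      unfold gromov at h1
      have h2 : greenDist μ γ' (p i) ≤ Λ * r :=
        (hup _ _).trans (mul_le_mul_of_nonneg_left hpi hΛ0.le)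
      have t1 := pm.tri 1 (p i) γ'
      have t2 := pm.tri γ' (p i) γ
      rw [pm.symm (p i) γ'] at t1
      rw [pm.symm γ (p i)] at h1
      rw [hex 1 γ, hex 1 γ', hex γ' γ]
      have e : Real.exp (2 * τ + 2 * Λ * r) / A * (A * Real.exp (-greenDist μ 1 γ')) *
          (A * Real.exp (-greenDist μ γ' γ)) = A * Real.exp (2 * τ + 2 * Λ * r
          + -greenDist μ 1 γ' + -greenDist μ γ' γ) := by
        generalize 2 * τ + 2 * Λ * r = E
        rw [Real.exp_add, Real.exp_add]; field_simp
      rw [e]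
      refine mul_le_mul_of_nonneg_left (Real.exp_le_exp.2 ?_) hA0.le
      linarith
  · rintro ⟨⟨C₁, c₁, hC₁, hc₁, hED⟩, hQR⟩
    obtain ⟨δ, hδ, hyp⟩ := (hG.2.2 S hS).1
    have hQ : ∀ r : ℝ, 0 ≤ r → ∃ K, ∀ γ γ', NearWordGeodesic S 1 γ γ' r → 
        greenDist μ 1 γ' + greenDist μ γ' γ ≤ greenDist μ 1 γ + K := by
      intro r hr
      obtain ⟨C, hC, h⟩ := hQR r hr
      refine ⟨Real.log (C * A), fun γ γ' hn => ?_⟩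
      have h1 := h γ γ' hn
      rw [hex 1 γ, hex 1 γ', hex γ' γ] at h1
      have e : C * (A * Real.exp (-greenDist μ 1 γ')) * (A * Real.exp (-greenDist μ γ' γ)) =
          A * Real.exp (Real.log (C * A) + -greenDist μ 1 γ' + -greenDist μ γ' γ) := by
        rw [Real.exp_add, Real.exp_add, Real.exp_log (by positivity)]; ring
      rw [e] at h1
      have := Real.exp_le_exp.1 (le_of_mul_le_mul_left h1 hA0)
      linarith
    refine ⟨?_, hyp_of_QR S hS pm hyp (QR_gromov S hS li pm hδ hyp hQ)⟩
    have hlo : ∀ x y, c₁ * wordDist S x y ≤ greenDist μ x y + |Real.log (C₁ / A)| := by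
      intro x y
      have e1 := li x⁻¹ x y
      have e2 := wordDist_li S x⁻¹ x y
      rw [inv_mul_cancel] at e1 e2
      rw [← e1, ← e2]
      have h1 := hED (x⁻¹ * y)
      rw [hex 1 (x⁻¹ * y)] at h1
      have e : C₁ * Real.exp (-c₁ * wordDist S 1 (x⁻¹ * y)) =
          A * Real.exp (Real.log (C₁ / A) + -c₁ * wordDist S 1 (x⁻¹ * y)) := by
        rw [Real.exp_add, Real.exp_log (by positivity)]; field_simp
      rw [e] at h1
      have := Real.exp_le_exp.1 (le_of_mul_le_mul_left h1 hA0)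
      linarith [le_abs_self (Real.log (C₁ / A))]
    set B := |Real.log (C₁ / A)| with hB
    have hB0 : 0 ≤ B := abs_nonneg _
    refine ⟨id, max Λ (1 / c₁), B / c₁, 0, hΛ.trans (le_max_left _ _), by positivity, le_rfl,
      fun x y => ⟨?_, ?_⟩, fun y => ⟨y, by simp [wp.refl]⟩⟩
    · have h1 : greenDist μ x y / max Λ (1 / c₁) ≤ wordDist S x y := by
        rw [div_le_iff₀ (lt_of_lt_of_le hΛ0 (le_max_left _ _)), mul_comm]
        exact (hup x y).trans (mul_le_mul_of_nonneg_right (le_max_left _ _) (wp.nonneg _ _))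
      have : 0 ≤ B / c₁ := by positivity
      simp only [id]; linarith
    · have h1 : wordDist S x y ≤ 1 / c₁ * greenDist μ x y + B / c₁ := by
        rw [one_div_mul_eq_div, ← add_div, le_div_iff₀ hc₁, mul_comm]; exact hlo x y
      have h2 := mul_le_mul_of_nonneg_right (le_max_right Λ (1 / c₁)) (pm.nonneg x y)
      simp only [id]; linarith

end GHM
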